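/- arXiv:1808.02804 — 4 statements merged into one kernel-verified Lean document; each statement's English description precedes it below -/
import Mathlib

section
/- Let T be a hyperbolic homeomorphism of a compact metric space (X,d), with constant ε₀ as in the definition. Then there exist constants κ_s ∈ (0,1] and C > 0 such that whenever four points x, x', y, y' ∈ X satisfy x' ∈ W^u_{ε₀}(x), y' ∈ W^u_{ε₀}(y), y ∈ W^s_{ε₀}(x), and y' ∈ W^s_{ε₀}(x'), one has d(y, y') ≤ C·d(x, x')^{κ_s}. (Proposition 2.5 of the paper: transverse Hölder regularity of stable sets.) -/
/-- Local stable set `W^s_ε(x)`. -/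
def locStable {X : Type*} [MetricSpace X] (T : X ≃ₜ X) (ε : ℝ) (x : X) : Set X :=
  {y | ∀ n : ℕ, dist ((T : X → X)^[n] y) ((T : X → X)^[n] x) ≤ ε}

/-- Local unstable set `W^u_ε(x)`. -/
def locUnstable {X : Type*} [MetricSpace X] (T : X ≃ₜ X) (ε : ℝ) (x : X) : Set X :=
  {y | ∀ n : ℕ, dist ((T.symm : X → X)^[n] y) ((T.symm : X → X)^[n] x) ≤ ε}

/-- Global stable set `W^s(x)`. -/
def gStable {X : Type*} [MetricSpace X] (T : X ≃ₜ X) (x : X) : Set X :=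
  {y | Filter.Tendsto (fun n : ℕ => dist ((T : X → X)^[n] y) ((T : X → X)^[n] x))
    Filter.atTop (nhds 0)}

/-- Global unstable set `W^u(x)`. -/
def gUnstable {X : Type*} [MetricSpace X] (T : X ≃ₜ X) (x : X) : Set X :=
  {y | Filter.Tendsto (fun n : ℕ => dist ((T.symm : X → X)^[n] y) ((T.symm : X → X)^[n] x))
    Filter.atTop (nhds 0)}

/-- `T` is a hyperbolic homeomorphism with constants `ε₀, ε₁`, hyperbolicity exponents
`lu, ls`, bracket map `br` and bracket constant `C₀`. -/
structure HypHomeo {X : Type*} [MetricSpace X] (T : X ≃ₜ X) (ε₀ ε₁ : ℝ)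
    (lu ls : X → ℝ) (br : X → X → X) (C₀ : ℝ) : Prop where
  lipschitz_T : ∃ K : NNReal, LipschitzWith K (T : X → X)
  lipschitz_Tinv : ∃ K : NNReal, LipschitzWith K (T.symm : X → X)
  eps0_pos : 0 < ε₀
  cont_lu : Continuous lu
  cont_ls : Continuous ls
  pos_lu : ∀ x, 0 < lu x
  pos_ls : ∀ x, 0 < ls x
  contract_u : ∀ x x' x'', x' ∈ locUnstable T ε₀ x → x'' ∈ locUnstable T ε₀ x →
    dist (T.symm x') (T.symm x'') ≤ Real.exp (-lu x) * dist x' x''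
  contract_s : ∀ y y' y'', y' ∈ locStable T ε₀ y → y'' ∈ locStable T ε₀ y →
    dist (T y') (T y'') ≤ Real.exp (-ls y) * dist y' y''
  eps1_pos : 0 < ε₁
  eps1_lt : ε₁ < ε₀
  bracket_spec : ∀ x y, dist x y ≤ 2 * ε₁ →
    locUnstable T ε₀ x ∩ locStable T ε₀ y = {br x y}
  bracket_cont : ContinuousOn (fun p : X × X => br p.1 p.2) {p : X × X | dist p.1 p.2 ≤ 2 * ε₁}
  C0_pos : 0 < C₀
  bracket_bound : ∀ x y, dist x y ≤ 2 * ε₁ →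
    max (dist (br x y) x) (dist (br x y) y) ≤ C₀ * dist x y

/-!
Since stable sets contract, `T^n y` and `T^n y'` follow `T^n x` and `T^n x'`, which stay close as
long as `K^n * dist x x'` is small, `K` being a Lipschitz constant of `T`. As long as `T^n y` and
`T^n y'` stay within `ε`, their distance grows at least like `θ⁻ⁿ`. So `dist y y' ≤ ε * θ^n` for
every `n` up to about `log (1 / dist x x') / log K`, which is a Hölder bound.

The first few iterates need a separate argument, as the stable contraction has not acted enough yet:
there, `y` and `y'` are close because a local stable and a local unstable set share at most one
point, and by compactness nearby local stable sets then meet a local unstable set in nearby points.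
-/

section HolderBound

theorem exists_mul_rpow_le_one {θ K : ℝ} (hθ : θ < 1) (hK : K ≠ 0) :
    ∃ κ : ℝ, 0 < κ ∧ κ ≤ 1 ∧ θ * K ^ κ ≤ 1 := by
  have hlim : Filter.Tendsto (fun κ : ℝ => θ * K ^ κ) (nhdsWithin 0 (Set.Ioi 0)) (nhds θ) := by
    simpa using ((Real.continuousAt_const_rpow hK).tendsto.const_mul θ).mono_left
      (nhdsWithin_le_nhds (a := (0 : ℝ)) (s := Set.Ioi 0))
  obtain ⟨κ, hκ, hκ₀, hκ₁⟩ :=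
    ((hlim.eventually_le_const hθ).and (Ioc_mem_nhdsGT zero_lt_one)).exists
  exact ⟨κ, hκ₀, hκ₁, hκ⟩

theorem pow_le_rpow_of_one_le_pow_mul {θ K κ t : ℝ} {n : ℕ} (hθ : 0 ≤ θ) (hK : 0 ≤ K)
    (hκ : 0 ≤ κ) (hθK : θ * K ^ κ ≤ 1) (ht : 0 ≤ t) (hKt : 1 ≤ K ^ n * t) :
    θ ^ n ≤ t ^ κ :=
  calc θ ^ n ≤ θ ^ n * (K ^ n * t) ^ κ :=
        le_mul_of_one_le_right (by positivity) (Real.one_le_rpow hKt hκ)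
    _ = (θ * K ^ κ) ^ n * t ^ κ := by
      rw [Real.mul_rpow (by positivity) ht, ← Real.rpow_pow_comm hK]; ring
    _ ≤ t ^ κ := mul_le_of_le_one_left (by positivity) (pow_le_one₀ (by positivity) hθK)

theorem le_mul_rpow_of_forall_pow_mul_le {θ K κ η A D δ : ℝ} (hθ : 0 ≤ θ) (hK : 1 < K)
    (hκ : 0 < κ) (hθK : θ * K ^ κ ≤ 1) (hη : 0 < η) (hA : 0 ≤ A) (hδ : 0 ≤ δ) (hDA : D ≤ A)
    (hD : ∀ n : ℕ, K ^ n * δ ≤ η → D ≤ A * θ ^ n) :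
    D ≤ A * (K / η * δ) ^ κ := by
  have hK₀ : 0 < K := one_pos.trans hK
  rcases hδ.eq_or_lt with rfl | hδ
  · have hθ₁ : θ < 1 := by nlinarith [Real.one_lt_rpow hK hκ]
    have hlim := (tendsto_pow_atTop_nhds_zero_of_lt_one hθ hθ₁).const_mul A
    rw [mul_zero, Real.zero_rpow hκ.ne']
    exact ge_of_tendsto' hlim fun n => hD n (by simpa using hη.le)
  rcases le_or_gt δ η with hδη | hδη
  · obtain ⟨n, hn, hn'⟩ := exists_nat_pow_near ((one_le_div hδ).2 hδη) hK
    rw [le_div_iff₀ hδ] at hn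
    have hlarge : 1 ≤ K ^ n * (K / η * δ) := by
      rw [div_lt_iff₀ hδ, pow_succ] at hn'
      rw [show K ^ n * (K / η * δ) = K ^ n * K * δ / η by ring, one_le_div hη]
      exact hn'.le
    have hpow := pow_le_rpow_of_one_le_pow_mul hθ hK₀.le hκ.le hθK (by positivity) hlarge
    exact (hD n hn).trans (by gcongr)
  · have hlarge : 1 ≤ K / η * δ := by
      rw [div_mul_eq_mul_div, one_le_div hη]
      nlinarith
    exact hDA.trans (le_mul_of_one_le_right hA (Real.one_le_rpow hlarge hκ.le))

end HolderBound

section LocalSets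

variable {X : Type*} [MetricSpace X] {T : X ≃ₜ X} {ε : ℝ} {x y : X}

theorem mem_locStable_self (hε : 0 ≤ ε) : x ∈ locStable T ε x := fun n => by
  rwa [dist_self]

theorem dist_le_of_mem_locStable (h : y ∈ locStable T ε x) : dist y x ≤ ε := h 0

theorem dist_le_of_mem_locUnstable (h : y ∈ locUnstable T ε x) : dist y x ≤ ε := h 0

theorem map_mem_locStable (h : y ∈ locStable T ε x) : T y ∈ locStable T ε (T x) :=
  fun n => h (n + 1)

theorem map_mem_locUnstable (h : y ∈ locUnstable T ε x) (hT : dist (T y) (T x) ≤ ε) :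
    T y ∈ locUnstable T ε (T x)
  | 0 => hT
  | n + 1 => by simpa only [Function.iterate_succ_apply, T.symm_apply_apply] using h n

theorem iterate_mem_locUnstable (h : y ∈ locUnstable T ε x) (n : ℕ)
    (hT : ∀ i ≤ n, dist (T^[i] y) (T^[i] x) ≤ ε) : T^[n] y ∈ locUnstable T ε (T^[n] x) := by
  induction n with
  | zero => exact h
  | succ n ih =>
    have hTn := hT (n + 1) le_rfl
    rw [Function.iterate_succ_apply', Function.iterate_succ_apply'] at hTn ⊢
    exact map_mem_locUnstable (ih fun i hi => hT i (hi.trans n.le_succ)) hTn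

theorem isClosed_setOf_mem_locStable (T : X ≃ₜ X) (ε : ℝ) :
    IsClosed {p : X × X | p.2 ∈ locStable T ε p.1} := by
  have hinter : {p : X × X | p.2 ∈ locStable T ε p.1} =
      ⋂ n : ℕ, {p | dist (T^[n] p.2) (T^[n] p.1) ≤ ε} := by
    ext p
    simp [locStable]
  rw [hinter]
  exact isClosed_iInter fun n => isClosed_le
    (((T.continuous.iterate n).comp continuous_snd).dist
      ((T.continuous.iterate n).comp continuous_fst)) continuous_const

end LocalSets

/-- `T` shrinks distances within each local stable set `W^s_ε(x)` by the uniform factor `θ`.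
As `W^u_ε` for `T` is `W^s_ε` for `T.symm`, the contraction of local unstable sets
under `T⁻¹` is `ContractsLocStable T.symm ε θ`. -/
def ContractsLocStable {X : Type*} [MetricSpace X] (T : X ≃ₜ X) (ε : ℝ) (θ : NNReal) : Prop :=
  ∀ x, LipschitzOnWith θ T (locStable T ε x)

theorem exists_contractsLocStable_of_exp {X : Type*} [MetricSpace X] [CompactSpace X]
    {T : X ≃ₜ X} {ε : ℝ} {l : X → ℝ} (hl : Continuous l) (hpos : ∀ x, 0 < l x)
    (h : ∀ x y z, y ∈ locStable T ε x → z ∈ locStable T ε x →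
      dist (T y) (T z) ≤ Real.exp (-l x) * dist y z) :
    ∃ θ : NNReal, θ < 1 ∧ ContractsLocStable T ε θ := by
  obtain ⟨c, hc, hcl⟩ :=
    isCompact_univ.exists_forall_le' (a := 0) hl.continuousOn fun x _ => hpos x
  refine ⟨(Real.exp (-c)).toNNReal, ?_, fun x => ?_⟩
  · exact Real.toNNReal_lt_one.2 (Real.exp_lt_one_iff.2 (neg_lt_zero.2 hc))
  · refine LipschitzOnWith.of_dist_le_mul fun y hy z hz => (h x y z hy hz).trans ?_
    rw [Real.coe_toNNReal _ (Real.exp_pos _).le]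
    gcongr
    exact hcl x trivial

section Contraction

variable {X : Type*} [MetricSpace X] {T : X ≃ₜ X} {ε : ℝ} {K θ θu θs : NNReal} {x x' y y' : X}

theorem ContractsLocStable.dist_iterate_le (h : ContractsLocStable T ε θ)
    (hy : y ∈ locStable T ε x) (hy' : y' ∈ locStable T ε x) (n : ℕ) :
    dist (T^[n] y) (T^[n] y') ≤ θ ^ n * dist y y' := by
  induction n generalizing x y y' with
  | zero => simp
  | succ n ih =>
    calc dist (T^[n] (T y)) (T^[n] (T y')) ≤ θ ^ n * dist (T y) (T y') :=
          ih (map_mem_locStable hy) (map_mem_locStable hy')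
      _ ≤ θ ^ n * (θ * dist y y') := by gcongr; exact (h x).dist_le_mul y hy y' hy'
      _ = θ ^ (n + 1) * dist y y' := by ring

theorem ContractsLocStable.dist_iterate_center_le (h : ContractsLocStable T ε θ)
    (hy : y ∈ locStable T ε x) (n : ℕ) : dist (T^[n] y) (T^[n] x) ≤ θ ^ n * ε := by
  have hyx := dist_le_of_mem_locStable hy
  calc dist (T^[n] y) (T^[n] x) ≤ θ ^ n * dist y x :=
        h.dist_iterate_le hy (mem_locStable_self (dist_nonneg.trans hyx)) n
    _ ≤ θ ^ n * ε := by gcongr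

theorem ContractsLocStable.dist_le_pow_mul_of_iterate (hu : ContractsLocStable T.symm ε θ)
    (hy' : y' ∈ locUnstable T ε y) (n : ℕ) (hclose : ∀ i ≤ n, dist (T^[i] y') (T^[i] y) ≤ ε) :
    dist y' y ≤ θ ^ n * ε := by
  have hTn : T^[n] y' ∈ locStable T.symm ε (T^[n] y) := iterate_mem_locUnstable hy' n hclose
  have hleft : Function.LeftInverse T.symm^[n] T^[n] :=
    Function.LeftInverse.iterate T.symm_apply_apply n
  simpa only [hleft y', hleft y] using hu.dist_iterate_center_le hTn n

theorem eq_of_mem_locUnstable_of_mem_locStable (hu : ContractsLocStable T.symm ε θu)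
    (hs : ContractsLocStable T ε θs) (hθu : θu < 1) (hθs : θs ≤ 1)
    (hy' : y' ∈ locUnstable T ε y) (hyx : y ∈ locStable T ε x) (hyx' : y' ∈ locStable T ε x) :
    y' = y := by
  have hclose (i : ℕ) : dist (T^[i] y') (T^[i] y) ≤ ε :=
    calc dist (T^[i] y') (T^[i] y) ≤ θs ^ i * dist y' y := hs.dist_iterate_le hyx' hyx i
      _ ≤ dist y' y := mul_le_of_le_one_left dist_nonneg (pow_le_one₀ θs.2 hθs)
      _ ≤ ε := dist_le_of_mem_locUnstable hy'
  have hlim := (tendsto_pow_atTop_nhds_zero_of_lt_one θu.2 hθu).mul_const ε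
  rw [zero_mul] at hlim
  exact dist_le_zero.1 <| ge_of_tendsto' hlim fun n =>
    hu.dist_le_pow_mul_of_iterate hy' n fun i _ => hclose i

theorem exists_dist_lt_of_mem_locStable [CompactSpace X] (hu : ContractsLocStable T.symm ε θu)
    (hs : ContractsLocStable T ε θs) (hθu : θu < 1) (hθs : θs ≤ 1) {r : ℝ} (hr : 0 < r) :
    ∃ a > 0, ∀ x x' y y' : X, y' ∈ locUnstable T ε y → y ∈ locStable T ε x →
      y' ∈ locStable T ε x' → dist x x' < a → dist y' y < r := by
  let S : Set ((X × X) × (X × X)) := {p | p.2.2 ∈ locUnstable T ε p.2.1 ∧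
    p.2.1 ∈ locStable T ε p.1.1 ∧ p.2.2 ∈ locStable T ε p.1.2 ∧ r ≤ dist p.2.2 p.2.1}
  have hS : IsClosed S :=
    ((isClosed_setOf_mem_locStable T.symm ε).preimage continuous_snd).inter <|
      ((isClosed_setOf_mem_locStable T ε).preimage
        (continuous_fst.fst.prodMk continuous_snd.fst)).inter <|
      ((isClosed_setOf_mem_locStable T ε).preimage
        (continuous_fst.snd.prodMk continuous_snd.snd)).inter <|
      isClosed_le continuous_const (continuous_snd.snd.dist continuous_snd.fst)
  have hpos : ∀ p ∈ S, 0 < dist p.1.1 p.1.2 := by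
    rintro ⟨⟨x, x'⟩, y, y'⟩ ⟨hy', hyx, hyx', hdist⟩
    refine dist_pos.2 fun hxx' : x = x' => ?_
    subst hxx'
    have heq := eq_of_mem_locUnstable_of_mem_locStable hu hs hθu hθs hy' hyx hyx'
    exact dist_pos.1 (hr.trans_le hdist) heq
  obtain ⟨a, ha, hle⟩ := hS.isCompact.exists_forall_le' (by fun_prop) hpos
  refine ⟨a, ha, fun x x' y y' hy' hyx hyx' hxx' => ?_⟩
  by_contra! hdist
  exact hxx'.not_ge (hle ((x, x'), y, y') ⟨hy', hyx, hyx', hdist⟩)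

theorem ContractsLocStable.dist_iterate_le_of_lipschitzWith (hs : ContractsLocStable T ε θ)
    (hT : LipschitzWith K T) (hyx : y ∈ locStable T ε x) (hyx' : y' ∈ locStable T ε x')
    (n : ℕ) : dist (T^[n] y') (T^[n] y) ≤ 2 * θ ^ n * ε + K ^ n * dist x x' := by
  have hy := hs.dist_iterate_center_le hyx n
  have hy' := hs.dist_iterate_center_le hyx' n
  have hx := (hT.iterate n).dist_le_mul x x'
  rw [NNReal.coe_pow] at hx
  rw [dist_comm] at hy hx
  linarith [dist_triangle4 (T^[n] y') (T^[n] x') (T^[n] x) (T^[n] y)]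

theorem exists_forall_dist_iterate_le [CompactSpace X] (hε : 0 < ε)
    (hu : ContractsLocStable T.symm ε θu) (hs : ContractsLocStable T ε θs)
    (hθu : θu < 1) (hθs : θs < 1) (hT : LipschitzWith K T) (hK : 1 ≤ K) :
    ∃ η > 0, ∀ x x' y y' : X, y' ∈ locUnstable T ε y → y ∈ locStable T ε x →
      y' ∈ locStable T ε x' → ∀ n : ℕ, K ^ n * dist x x' ≤ η →
        ∀ i ≤ n, dist (T^[i] y') (T^[i] y) ≤ ε := by
  have hK' : 1 ≤ (K : ℝ) := hK
  obtain ⟨m, hm⟩ := exists_pow_lt_of_lt_one (show (0 : ℝ) < 1 / 4 by norm_num) hθs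
  obtain ⟨a, ha, hdist⟩ := exists_dist_lt_of_mem_locStable hu hs hθu hθs.le
    (show 0 < ε / K ^ m by positivity)
  refine ⟨min (a / 2) (ε / 2), by positivity, fun x x' y y' hy' hyx hyx' n hn i hi => ?_⟩
  have hKη {j : ℕ} (hj : j ≤ n) : K ^ j * dist x x' ≤ min (a / 2) (ε / 2) :=
    hn.trans' (by gcongr)
  rcases le_total i m with him | hmi
  · have hxx' : dist x x' < a := by
      have hη := hKη n.zero_le
      rw [pow_zero, one_mul] at hη
      linarith [min_le_left (a / 2) (ε / 2)]
    calc dist (T^[i] y') (T^[i] y) ≤ K ^ i * dist y' y := by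
          simpa using (hT.iterate i).dist_le_mul y' y
      _ ≤ K ^ m * (ε / K ^ m) := by
          gcongr
          exact (hdist x x' y y' hy' hyx hyx' hxx').le
      _ = ε := by field_simp
  · have hθi : (θs : ℝ) ^ i ≤ 1 / 4 := (pow_le_pow_of_le_one θs.2 hθs.le hmi).trans hm.le
    calc dist (T^[i] y') (T^[i] y) ≤ 2 * θs ^ i * ε + K ^ i * dist x x' :=
          hs.dist_iterate_le_of_lipschitzWith hT hyx hyx' i
      _ ≤ 2 * (1 / 4) * ε + ε / 2 := by
          gcongr
          exact (hKη hi).trans (min_le_right _ _)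
      _ = ε := by ring

theorem transverse_regularity_base_general [CompactSpace X] (hε : 0 < ε)
    (hu : ContractsLocStable T.symm ε θu) (hs : ContractsLocStable T ε θs)
    (hθu : θu < 1) (hθs : θs < 1) (hT : LipschitzWith K T) :
    ∃ κ C : ℝ, 0 < κ ∧ κ ≤ 1 ∧ 0 < C ∧
      ∀ x x' y y' : X, y' ∈ locUnstable T ε y → y ∈ locStable T ε x →
        y' ∈ locStable T ε x' → dist y y' ≤ C * dist x x' ^ κ := by
  obtain ⟨L, hKL, hL⟩ : ∃ L : NNReal, K ≤ L ∧ 1 < L :=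
    ⟨max K 2, le_max_left _ _, lt_max_of_lt_right one_lt_two⟩
  have hL₀ : (L : ℝ) ≠ 0 := by exact_mod_cast (one_pos.trans hL).ne'
  obtain ⟨κ, hκ₀, hκ₁, hθL⟩ := exists_mul_rpow_le_one (show (θu : ℝ) < 1 from hθu) hL₀
  obtain ⟨η, hη, hclose⟩ :=
    exists_forall_dist_iterate_le hε hu hs hθu hθs (hT.weaken hKL) hL.le
  refine ⟨κ, ε * (L / η) ^ κ, hκ₀, hκ₁, by positivity, fun x x' y y' hy' hyx hyx' => ?_⟩
  rw [dist_comm y y', mul_assoc, ← Real.mul_rpow (by positivity) dist_nonneg]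
  refine le_mul_rpow_of_forall_pow_mul_le θu.2 hL hκ₀ hθL hη hε.le dist_nonneg
    (dist_le_of_mem_locUnstable hy') fun n hn => ?_
  rw [mul_comm ε]
  exact hu.dist_le_pow_mul_of_iterate hy' n (hclose x x' y y' hy' hyx hyx' n hn)

end Contraction

/-- **Proposition 2.5** (Bochi–Garibaldi, "Extremal Norms for Fiber-Bunched Cocycles"):
transverse Hölder regularity of stable sets of a hyperbolic homeomorphism. -/
theorem transverse_regularity_base {X : Type*} [MetricSpace X] [CompactSpace X]
    (T : X ≃ₜ X) (ε₀ ε₁ : ℝ) (lu ls : X → ℝ) (br : X → X → X) (C₀ : ℝ)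
    (hT : HypHomeo T ε₀ ε₁ lu ls br C₀) :
    ∃ κ C : ℝ, 0 < κ ∧ κ ≤ 1 ∧ 0 < C ∧
      ∀ x x' y y' : X,
        x' ∈ locUnstable T ε₀ x → y' ∈ locUnstable T ε₀ y →
        y ∈ locStable T ε₀ x → y' ∈ locStable T ε₀ x' →
        dist y y' ≤ C * dist x x' ^ κ := by
  obtain ⟨K, hK⟩ := hT.lipschitz_T
  obtain ⟨θu, hθu, hu⟩ :=
    exists_contractsLocStable_of_exp (T := T.symm) hT.cont_lu hT.pos_lu hT.contract_u
  obtain ⟨θs, hθs, hs⟩ := exists_contractsLocStable_of_exp hT.cont_ls hT.pos_ls hT.contract_s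
  obtain ⟨κ, C, hκ₀, hκ₁, hC, hdist⟩ :=
    transverse_regularity_base_general hT.eps0_pos hu hs hθu hθs hK
  exact ⟨κ, C, hκ₀, hκ₁, hC, fun x x' y y' _ => hdist x x' y y'⟩
end

section
/- Let (X,d) be a compact metric space and θ > 0 such that the algebra of θ-Hölder functions on X is normal. Let 0 < a < 1, ε₁ > 0, and set θ̄ := max{θ, 1}. Then there exists a function ζ : X × X → [0,1] which is θ̄-Hölder with respect to the metric D((x,y),(x',y')) := max{d(x,x'), d(y,y')}, such that ζ(x,y) = 1 whenever d(x,y) ≤ aε₁ and ζ(x,y) = 0 whenever d(x,y) ≥ ε₁. (Lemma 5.5 of the paper.) -/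
/-!
Two sets at positive distance are always separated by a Lipschitz function, so `X` is normal for the
exponent `max θ 1`. Separation by Hölder functions is stable under `min` and `max`: a minimum of a
bump in `x` and a bump in `y` is a bump on a ball of `X × X` for the max metric, and a maximum of
finitely many of these, with centres in a fine net, separates any two sets at positive distance in
`X × X`. The sets `{ε₁ ≤ d}` and `{d ≤ a ε₁}` are such a pair, because `d` is Lipschitz on `X × X`.
-/

open Metric Set
open scoped NNReal

section MemHolder

variable {X Y Z : Type*} [PseudoEMetricSpace X] [PseudoEMetricSpace Y] [PseudoEMetricSpace Z]
  {r : ℝ≥0}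

theorem memHolder_lipschitzWith_comp {K : ℝ≥0} {φ : Y → Z} {f : X → Y} (hφ : LipschitzWith K φ)
    (hf : MemHolder r f) : MemHolder r (φ ∘ f) := by
  obtain ⟨C, hC⟩ := hf
  simpa only [one_mul] using ((holderWith_one.2 hφ).comp hC).memHolder

theorem memHolder_comp_lipschitzWith {K : ℝ≥0} {g : Y → Z} {f : X → Y} (hg : MemHolder r g)
    (hf : LipschitzWith K f) : MemHolder r (g ∘ f) := by
  obtain ⟨C, hC⟩ := hg
  simpa only [mul_one] using (hC.comp (holderWith_one.2 hf)).memHolder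

theorem memHolder_prodMk {f : X → Y} {g : X → Z} (hf : MemHolder r f) (hg : MemHolder r g) :
    MemHolder r fun x => (f x, g x) := by
  obtain ⟨C, hC⟩ := hf
  obtain ⟨D, hD⟩ := hg
  exact ⟨max C D, fun x y =>
    max_le (hC.mono (le_max_left C D) x y) (hD.mono (le_max_right C D) x y)⟩

theorem memHolder_iff_exists_dist_le {X Y : Type*} [PseudoMetricSpace X] [PseudoMetricSpace Y]
    {f : X → Y} :
    MemHolder r f ↔ ∃ C : ℝ, ∀ x y, dist (f x) (f y) ≤ C * dist x y ^ (r : ℝ) := by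
  refine ⟨fun ⟨C, hC⟩ => ⟨C, hC.dist_le⟩, fun ⟨C, hC⟩ => ⟨C.toNNReal, fun x y => ?_⟩⟩
  have h : nndist (f x) (f y) ≤ C.toNNReal * nndist x y ^ (r : ℝ) := by
    rw [← NNReal.coe_le_coe]
    push_cast
    exact (hC x y).trans (by gcongr; exact Real.le_coe_toNNReal C)
  rw [edist_nndist, edist_nndist, ← ENNReal.coe_rpow_of_nonneg _ r.coe_nonneg]
  exact_mod_cast h

end MemHolder

section AreSeparated

variable {X : Type*} [PseudoMetricSpace X]

theorem areSeparated_iff_exists_le_dist {F E : Set X} :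
    AreSeparated F E ↔ ∃ δ > 0, ∀ x ∈ F, ∀ y ∈ E, δ ≤ dist x y := by
  constructor
  · rintro ⟨ρ, hρ, h⟩
    obtain ⟨δ, hδ, hδρ⟩ := ENNReal.lt_iff_exists_nnreal_btwn.1 (pos_iff_ne_zero.2 hρ)
    refine ⟨δ, by exact_mod_cast hδ, fun x hx y hy => ?_⟩
    have hxy : (δ : ENNReal) ≤ edist x y := hδρ.le.trans (h x hx y hy)
    rw [edist_nndist] at hxy
    exact_mod_cast hxy
  · rintro ⟨δ, hδ, h⟩
    refine ⟨ENNReal.ofReal δ, (ENNReal.ofReal_pos.2 hδ).ne', fun x hx y hy => ?_⟩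
    rw [edist_dist]
    exact ENNReal.ofReal_le_ofReal (h x hx y hy)

theorem areSeparated_compl_ball_closedBall (c : X) {s t : ℝ} (hst : s < t) :
    AreSeparated (ball c t)ᶜ (closedBall c s) := by
  refine areSeparated_iff_exists_le_dist.2 ⟨t - s, sub_pos.2 hst, fun x hx y hy => ?_⟩
  rw [mem_compl_iff, mem_ball, not_lt] at hx
  rw [mem_closedBall] at hy
  linarith [dist_triangle x y c]

theorem areSeparated_le_dist_dist_le {s t : ℝ} (hst : s < t) :
    AreSeparated {p : X × X | t ≤ dist p.1 p.2} {p | dist p.1 p.2 ≤ s} := by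
  refine areSeparated_iff_exists_le_dist.2 ⟨(t - s) / 2, half_pos (sub_pos.2 hst), ?_⟩
  intro p (hp : t ≤ dist p.1 p.2) q (hq : dist q.1 q.2 ≤ s)
  have hpq : dist p.1 p.2 ≤ dist p.1 q.1 + dist q.1 q.2 + dist p.2 q.2 := by
    simpa only [dist_comm q.2 p.2] using dist_triangle4 p.1 q.1 q.2 p.2
  have h₁ : dist p.1 q.1 ≤ dist p q := le_max_left _ _
  have h₂ : dist p.2 q.2 ≤ dist p q := le_max_right _ _
  linarith

end AreSeparated

theorem totallyBounded_univ_prod {X Y : Type*} [PseudoMetricSpace X] [PseudoMetricSpace Y]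
    (hX : TotallyBounded (univ : Set X)) (hY : TotallyBounded (univ : Set Y)) :
    TotallyBounded (univ : Set (X × Y)) := by
  refine Metric.totallyBounded_iff.2 fun ε hε => ?_
  obtain ⟨S, hS, hXS⟩ := Metric.totallyBounded_iff.1 hX ε hε
  obtain ⟨T, hT, hYT⟩ := Metric.totallyBounded_iff.1 hY ε hε
  refine ⟨S ×ˢ T, hS.prod hT, fun p _ => ?_⟩
  obtain ⟨c, hc, hpc⟩ := mem_iUnion₂.1 (hXS (mem_univ p.1))
  obtain ⟨d, hd, hpd⟩ := mem_iUnion₂.1 (hYT (mem_univ p.2))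
  refine mem_iUnion₂.2 ⟨(c, d), ⟨hc, hd⟩, ?_⟩
  exact ball_prod_same c d ε ▸ ⟨hpc, hpd⟩

/-- The sets `F` and `E` are separated by an `r`-Hölder function `X → [0, 1]` that vanishes on `F`
and equals `1` on `E`. -/
def HolderSeparated {X : Type*} [PseudoEMetricSpace X] (r : ℝ≥0) (F E : Set X) : Prop :=
  ∃ g : X → ℝ, MemHolder r g ∧ (∀ x, g x ∈ Icc (0 : ℝ) 1) ∧ (∀ x ∈ F, g x = 0) ∧ ∀ x ∈ E, g x = 1

namespace HolderSeparated

variable {X Y : Type*} [PseudoEMetricSpace X] [PseudoEMetricSpace Y] {r : ℝ≥0}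

theorem mono {F F' E E' : Set X} (h : HolderSeparated r F' E') (hF : F ⊆ F') (hE : E ⊆ E') :
    HolderSeparated r F E := by
  obtain ⟨g, hg, hg01, hg0, hg1⟩ := h
  exact ⟨g, hg, hg01, fun x hx => hg0 x (hF hx), fun x hx => hg1 x (hE hx)⟩

theorem symm {F E : Set X} (h : HolderSeparated r F E) : HolderSeparated r E F := by
  obtain ⟨g, hg, hg01, hg0, hg1⟩ := h
  have hlip : LipschitzWith 1 fun u : ℝ => 1 - u := (IsometryEquiv.subLeft 1).isometry.lipschitz
  exact ⟨fun x => 1 - g x, memHolder_lipschitzWith_comp hlip hg,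
    fun x => Icc.mem_iff_one_sub_mem.1 (hg01 x),
    fun x hx => sub_eq_zero.2 (hg1 x hx).symm, fun x hx => sub_eq_self.2 (hg0 x hx)⟩

theorem univ_empty : HolderSeparated r (univ : Set X) ∅ :=
  ⟨fun _ => 0, memHolder_const', fun _ => unitInterval.zero_mem, fun _ _ => rfl,
    fun _ hx => hx.elim⟩

theorem preimage {K : ℝ≥0} {φ : X → Y} {F E : Set Y} (h : HolderSeparated r F E)
    (hφ : LipschitzWith K φ) : HolderSeparated r (φ ⁻¹' F) (φ ⁻¹' E) := by
  obtain ⟨g, hg, hg01, hg0, hg1⟩ := h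
  exact ⟨g ∘ φ, memHolder_comp_lipschitzWith hg hφ, fun x => hg01 (φ x),
    fun x hx => hg0 (φ x) hx, fun x hx => hg1 (φ x) hx⟩

theorem inter_union {F₁ F₂ E₁ E₂ : Set X} (h₁ : HolderSeparated r F₁ E₁)
    (h₂ : HolderSeparated r F₂ E₂) : HolderSeparated r (F₁ ∩ F₂) (E₁ ∪ E₂) := by
  obtain ⟨g, hg, hg01, hg0, hg1⟩ := h₁
  obtain ⟨h, hh, hh01, hh0, hh1⟩ := h₂
  refine ⟨fun x => max (g x) (h x),
    memHolder_lipschitzWith_comp lipschitzWith_max (memHolder_prodMk hg hh),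
    fun x => ⟨le_max_of_le_left (hg01 x).1, max_le (hg01 x).2 (hh01 x).2⟩,
    fun x hx => by simp only [hg0 x hx.1, hh0 x hx.2, max_self], ?_⟩
  rintro x (hx | hx)
  · exact (max_eq_left ((hh01 x).2.trans_eq (hg1 x hx).symm)).trans (hg1 x hx)
  · exact (max_eq_right ((hg01 x).2.trans_eq (hh1 x hx).symm)).trans (hh1 x hx)

theorem union_inter {F₁ F₂ E₁ E₂ : Set X} (h₁ : HolderSeparated r F₁ E₁)
    (h₂ : HolderSeparated r F₂ E₂) : HolderSeparated r (F₁ ∪ F₂) (E₁ ∩ E₂) :=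
  (h₁.symm.inter_union h₂.symm).symm

theorem biInter_biUnion {ι : Type*} {I : Set ι} (hI : I.Finite) {F E : ι → Set X}
    (h : ∀ i ∈ I, HolderSeparated r (F i) (E i)) :
    HolderSeparated r (⋂ i ∈ I, F i) (⋃ i ∈ I, E i) := by
  induction I, hI using Set.Finite.induction_on with
  | empty => simpa only [biInter_empty, biUnion_empty] using univ_empty
  | @insert i J _ _ ih =>
    rw [biInter_insert, biUnion_insert]
    exact (h i (mem_insert i J)).inter_union (ih fun j hj => h j (mem_insert_of_mem i hj))

theorem prod {F E : Set X} {F' E' : Set Y} (h : HolderSeparated r F E)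
    (h' : HolderSeparated r F' E') :
    HolderSeparated r (Prod.fst ⁻¹' F ∪ Prod.snd ⁻¹' F') (E ×ˢ E') :=
  (h.preimage LipschitzWith.prod_fst).union_inter (h'.preimage LipschitzWith.prod_snd)

end HolderSeparated

theorem holderSeparated_iff {X : Type*} [PseudoMetricSpace X] {r : ℝ≥0} {F E : Set X} :
    HolderSeparated r F E ↔ ∃ g : X → ℝ, (∃ C : ℝ, ∀ x y, |g x - g y| ≤ C * dist x y ^ (r : ℝ)) ∧
      (∀ x, g x ∈ Icc (0 : ℝ) 1) ∧ (∀ x ∈ F, g x = 0) ∧ ∀ x ∈ E, g x = 1 := by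
  simp only [HolderSeparated, memHolder_iff_exists_dist_le, Real.dist_eq]

/-- The `r`-Hölder functions on `X` separate closed sets at positive distance. On a compact space
this is normality of the algebra of `r`-Hölder functions, since there disjoint closed sets are at
positive distance. -/
def HolderNormal (r : ℝ≥0) (X : Type*) [PseudoEMetricSpace X] : Prop :=
  ∀ F E : Set X, IsClosed F → IsClosed E → AreSeparated F E → HolderSeparated r F E

section HolderNormal

variable {X Y : Type*} [PseudoMetricSpace X] [PseudoMetricSpace Y] {r : ℝ≥0}

theorem holderNormal_one : HolderNormal 1 X := by
  intro F E _ _ hFE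
  obtain ⟨δ, hδ, hdist⟩ := areSeparated_iff_exists_le_dist.1 hFE
  have hF : ∀ x ∈ F, x ∉ thickening δ E := fun x hx hxE => by
    obtain ⟨y, hy, hxy⟩ := mem_thickening_iff.1 hxE
    exact hxy.not_ge (hdist x hx y hy)
  exact ⟨fun x => thickenedIndicator hδ E x,
    (holderWith_one.2 (lipschitzWith_thickenedIndicator hδ E)).memHolder, fun x =>
    ⟨NNReal.coe_nonneg _, by exact_mod_cast thickenedIndicator_le_one hδ E x⟩,
    fun x hx => NNReal.coe_eq_zero.2 (thickenedIndicator_zero hδ E (hF x hx)),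
    fun x hx => NNReal.coe_eq_one.2 (thickenedIndicator_one hδ E hx)⟩

theorem HolderNormal.holderSeparated_compl_ball (hX : HolderNormal r X) (c : X) {s t : ℝ}
    (hst : s < t) : HolderSeparated r (ball c t)ᶜ (closedBall c s) :=
  hX _ _ isOpen_ball.isClosed_compl isClosed_closedBall (areSeparated_compl_ball_closedBall c hst)

theorem HolderNormal.holderSeparated_compl_ball_prod (hX : HolderNormal r X)
    (hY : HolderNormal r Y) (c : X × Y) {s t : ℝ} (hst : s < t) :
    HolderSeparated r (ball c t)ᶜ (closedBall c s) := by
  have h := (hX.holderSeparated_compl_ball c.1 hst).prod (hY.holderSeparated_compl_ball c.2 hst)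
  rwa [closedBall_prod_same, preimage_compl, preimage_compl, ← compl_inter, ← Set.prod_eq,
    ball_prod_same] at h

theorem holderNormal_of_forall_ball (hX : TotallyBounded (univ : Set X))
    (hball : ∀ (c : X) {s t : ℝ}, s < t → HolderSeparated r (ball c t)ᶜ (closedBall c s)) :
    HolderNormal r X := by
  intro F E _ _ hFE
  obtain ⟨δ, hδ, hdist⟩ := areSeparated_iff_exists_le_dist.1 hFE
  obtain ⟨T, hT, hcover⟩ := Metric.totallyBounded_iff.1 hX (δ / 3) (by positivity)
  let N : Set X := {c ∈ T | ∃ y ∈ E, dist y c < δ / 3}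
  have hN : HolderSeparated r (⋂ c ∈ N, (ball c (2 * δ / 3))ᶜ) (⋃ c ∈ N, closedBall c (δ / 3)) :=
    .biInter_biUnion (hT.subset (sep_subset _ _)) fun c _ => hball c (by linarith)
  refine hN.mono (fun x hx => mem_iInter₂.2 ?_) (fun y hy => mem_iUnion₂.2 ?_)
  · rintro c ⟨-, y, hy, hyc⟩ hxc
    rw [mem_ball] at hxc
    linarith [hdist x hx y hy, dist_triangle_right x y c]
  · obtain ⟨c, hc, hyc⟩ := mem_iUnion₂.1 (hcover (mem_univ y))
    exact ⟨c, ⟨hc, y, hy, hyc⟩, ball_subset_closedBall hyc⟩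

theorem HolderNormal.prod (hX : HolderNormal r X) (hY : HolderNormal r Y)
    (hXb : TotallyBounded (univ : Set X)) (hYb : TotallyBounded (univ : Set Y)) :
    HolderNormal r (X × Y) :=
  holderNormal_of_forall_ball (totallyBounded_univ_prod hXb hYb) fun c _ _ hst =>
    hX.holderSeparated_compl_ball_prod hY c hst

theorem HolderNormal.holderSeparated_dist (hX : HolderNormal r X)
    (hXb : TotallyBounded (univ : Set X)) {s t : ℝ} (hst : s < t) :
    HolderSeparated r {p : X × X | t ≤ dist p.1 p.2} {p | dist p.1 p.2 ≤ s} :=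
  hX.prod hX hXb hXb _ _ (isClosed_le continuous_const continuous_dist)
    (isClosed_le continuous_dist continuous_const) (areSeparated_le_dist_dist_le hst)

end HolderNormal

theorem exists_holder_bump_general {X : Type*} [PseudoMetricSpace X]
    (hX : TotallyBounded (univ : Set X)) {θ : ℝ}
    (hnormal : ∀ K₁ K₂ : Set X, IsClosed K₁ → IsClosed K₂ → AreSeparated K₁ K₂ →
      ∃ g : X → ℝ, (∃ C : ℝ, ∀ x y : X, |g x - g y| ≤ C * dist x y ^ θ) ∧
        (∀ x, g x ∈ Icc (0 : ℝ) 1) ∧ (∀ x ∈ K₁, g x = 0) ∧ (∀ x ∈ K₂, g x = 1))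
    {s t : ℝ} (hst : s < t) :
    ∃ ζ : X → X → ℝ,
      (∃ C : ℝ, ∀ x y x' y' : X,
        |ζ x y - ζ x' y'| ≤ C * max (dist x x') (dist y y') ^ max θ 1) ∧
      (∀ x y, ζ x y ∈ Icc (0 : ℝ) 1) ∧
      (∀ x y, dist x y ≤ s → ζ x y = 1) ∧
      (∀ x y, t ≤ dist x y → ζ x y = 0) := by
  obtain ⟨r, hr, hrX⟩ : ∃ r : ℝ≥0, (r : ℝ) = max θ 1 ∧ HolderNormal r X := by
    rcases le_total θ 1 with hθ | hθ
    · exact ⟨1, (max_eq_right hθ).symm, holderNormal_one⟩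
    · exact ⟨⟨θ, zero_le_one.trans hθ⟩, (max_eq_left hθ).symm, fun F E hF hE hFE =>
        holderSeparated_iff.2 (hnormal F E hF hE hFE)⟩
  obtain ⟨ζ, ⟨C, hC⟩, hζ01, hζ0, hζ1⟩ := holderSeparated_iff.1 (hrX.holderSeparated_dist hX hst)
  rw [hr] at hC
  exact ⟨fun x y => ζ (x, y), ⟨C, fun x y x' y' => hC (x, y) (x', y')⟩, fun x y => hζ01 (x, y),
    fun x y => hζ1 (x, y), fun x y => hζ0 (x, y)⟩

/-- **Lemma 5.5** of Bochi–Garibaldi, "Extremal Norms for Fiber-Bunched Cocycles":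
existence of a `max θ 1`-Hölder bump function `ζ` on `X × X` (with the max metric) which
equals `1` when `d(x,y) ≤ a·ε₁` and `0` when `d(x,y) ≥ ε₁`; here the algebra of θ-Hölder
functions on the compact metric space `X` is assumed to be normal. -/
theorem exists_holder_bump {X : Type*} [MetricSpace X] [CompactSpace X]
    (θ : ℝ) (hθ : 0 < θ)
    (hnormal : ∀ K₁ K₂ : Set X, IsCompact K₁ → IsCompact K₂ → Disjoint K₁ K₂ →
      ∃ g : X → ℝ, (∃ C : ℝ, ∀ x y : X, |g x - g y| ≤ C * dist x y ^ θ) ∧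
        (∀ x, g x ∈ Set.Icc (0 : ℝ) 1) ∧ (∀ x ∈ K₁, g x = 0) ∧ (∀ x ∈ K₂, g x = 1))
    (a ε₁ : ℝ) (ha0 : 0 < a) (ha1 : a < 1) (hε : 0 < ε₁) :
    ∃ ζ : X → X → ℝ,
      (∃ C : ℝ, ∀ x y x' y' : X,
        |ζ x y - ζ x' y'| ≤ C * max (dist x x') (dist y y') ^ max θ 1) ∧
      (∀ x y, ζ x y ∈ Set.Icc (0 : ℝ) 1) ∧
      (∀ x y, dist x y ≤ a * ε₁ → ζ x y = 1) ∧
      (∀ x y, ε₁ ≤ dist x y → ζ x y = 0) :=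
  exists_holder_bump_general isCompact_univ.totallyBounded
    (fun K₁ K₂ h₁ h₂ h => hnormal K₁ K₂ h₁.isCompact h₂.isCompact h.disjoint)
    (mul_lt_of_lt_one_left hε ha1)
end

section
/- Let f : Y → Y be an expansive homeomorphism of a compact metric space (Y,ρ). Then for every sufficiently small ε > 0: for each n ≥ 1 the quantity R(ε, ρ_{n,f}, f) is finite, and lim_{n→∞} (1/n)·log R(ε, ρ_{n,f}, f) = 0. (Lemma A.10 of the paper.) -/
/-- `dIter f m` is the metric `ρ_{m,f}(x,y) = max_{0 ≤ i < m} ρ(fⁱx, fⁱy)`. -/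
noncomputable def dIter {Y : Type*} [MetricSpace Y] (f : Y → Y) (m : ℕ) (x y : Y) : ℝ :=
  ⨆ i : Fin m, dist (f^[(i : ℕ)] x) (f^[(i : ℕ)] y)

/-- There exists a periodic `(ε, ρm, f)`-pseudoorbit of period `n`. -/
def HasPPO {Y : Type*} (f : Y → Y) (ρm : Y → Y → ℝ) (ε : ℝ) (n : ℕ) : Prop :=
  ∃ x : ZMod n → Y, ∀ i : ZMod n, ρm (f (x i)) (x (i + 1)) < ε

/-- A finite set is `(ε, ρm)`-separated. -/
def IsSeparated {Y : Type*} (ρm : Y → Y → ℝ) (ε : ℝ) (E : Finset Y) : Prop :=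
  ∀ x ∈ E, ∀ y ∈ E, x ≠ y → ε ≤ ρm x y

/-- `S(ε, ρm)`: the maximal cardinality of an `(ε, ρm)`-separated set. -/
noncomputable def sepCount {Y : Type*} (ρm : Y → Y → ℝ) (ε : ℝ) : ℕ :=
  sSup {k : ℕ | ∃ E : Finset Y, IsSeparated ρm ε E ∧ E.card = k}

/-- `R(ε, ρm, f)`: the minimal period of a periodic `(ε, ρm, f)`-pseudoorbit. -/
noncomputable def minPPOPeriod {Y : Type*} (f : Y → Y) (ρm : Y → Y → ℝ) (ε : ℝ) : ℕ :=
  sInf {n : ℕ | 0 < n ∧ HasPPO f ρm ε n}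

/-- The `n`-th iterate of a homeomorphism, for `n : ℤ`. -/
def zIter {Y : Type*} [TopologicalSpace Y] (f : Y ≃ₜ Y) : ℤ → Y → Y
  | Int.ofNat n => (f : Y → Y)^[n]
  | Int.negSucc n => (f.symm : Y → Y)^[n + 1]

/-! Write `N m` for the least number of classes in a partition of `Y` into classes of `ρ_{m,f}`-mesh
less than `ε`, and fix an optimal partition for `m = n`. Splicing orbits shows that if `fⁿ` has no
periodic `(ε, ρ_{n,f})`-pseudoorbit of period at most `k`, then the first `k` symbols of any
`fⁿ`-itinerary are distinct and are determined, together with their order, by the *set* of these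
symbols. Hence `N (n * k) ≤ (N n).choose k ≤ (e * N n / k) ^ k`. The gain of `k!` over the trivial
bound `N n ^ k` is decisive: `log N` is subadditive, so with `h = lim log (N m) / m` we have
`N (n * k) ≥ exp (h * n * k)`, whence `k ≤ e * N n * exp (-h * n)`, which is subexponential in `n`.
Interpolating `f` between the points of a pseudoorbit of `fⁿ` multiplies its period only by `n`. -/

open Filter Real Topology

section Pseudoorbits

variable {Y α : Type*} {ρ : Y → Y → ℝ} {ε : ℝ}

/-- Every fibre of the colouring `c` has `ρ`-mesh less than `ε`. Finite partitions of a space into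
small classes are encoded as such colourings with finitely many colours. -/
def HasSmallFibers (ρ : Y → Y → ℝ) (ε : ℝ) (c : Y → α) : Prop :=
  ∀ ⦃x y⦄, c x = c y → ρ x y < ε

lemma HasSmallFibers.hasPPO_of_return {c : Y → α} (hc : HasSmallFibers ρ ε c) {T : Y → Y} {m : ℕ}
    {x y : Y} (hx : c (T^[m] y) = c x) (hy : c (T x) = c y) : HasPPO T ρ ε (m + 1) := by
  let w : Fin (m + 1) → Y := Fin.snoc (fun i : Fin m => T^[i] y) x
  have color_w (i : Fin (m + 1)) : c (w i) = c (T^[i] y) := by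
    induction i using Fin.lastCases with
    | last => simp [w, hx]
    | cast i => simp [w]
  suffices ∀ i, c (T (w i)) = c (w (i + 1)) from ⟨w, fun i => hc (this i)⟩
  intro i
  rw [color_w]
  induction i using Fin.lastCases with
  | last => simp [w, hy]
  | cast i => simp [w, Function.iterate_succ_apply']

lemma HasSmallFibers.itinerary_injOn {c : Y → α} (hc : HasSmallFibers ρ ε c) {T : Y → Y} {k : ℕ}
    (hT : ∀ m < k, ¬ HasPPO T ρ ε (m + 1)) (x : Y) :
    Set.InjOn (fun i => c (T^[i] x)) (Set.Iio k) := by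
  have ne_of_lt {a b : ℕ} (hab : a < b) (hb : b < k) : c (T^[a] x) ≠ c (T^[b] x) := by
    obtain ⟨d, rfl⟩ := Nat.exists_eq_add_of_lt hab
    intro h
    refine hT d (by omega) (hc.hasPPO_of_return (x := T^[d] (T^[a] x)) rfl ?_)
    rw [← Function.iterate_succ_apply' T, ← Function.iterate_add_apply, h]
    congr 2
    omega
  intro a ha b hb h
  by_contra hab
  rcases Nat.lt_or_gt_of_ne hab with hab | hab
  · exact ne_of_lt hab hb h
  · exact ne_of_lt hab ha h.symm

lemma HasSmallFibers.itinerary_eq_of_image_eq [DecidableEq α] {c : Y → α}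
    (hc : HasSmallFibers ρ ε c) {T : Y → Y} {k : ℕ} (hT : ∀ m < k, ¬ HasPPO T ρ ε (m + 1))
    {x y : Y} (h : (Finset.range k).image (fun i => c (T^[i] x)) =
      (Finset.range k).image (fun i => c (T^[i] y))) :
    ∀ i < k, c (T^[i] x) = c (T^[i] y) := by
  have exists_index (i : Fin k) : ∃ j : Fin k, c (T^[j] y) = c (T^[i] x) := by
    have hi : c (T^[i] x) ∈ (Finset.range k).image (fun i => c (T^[i] y)) :=
      h ▸ Finset.mem_image_of_mem _ (Finset.mem_range.2 i.2)
    obtain ⟨j, hj, hji⟩ := Finset.mem_image.1 hi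
    exact ⟨⟨j, Finset.mem_range.1 hj⟩, hji⟩
  choose σ hσ using exists_index
  have σ_injective : Function.Injective σ := fun i j hij =>
    Fin.ext (hc.itinerary_injOn hT x i.2 j.2 (by simp only [← hσ, hij]))
  have σ_lt {i j : Fin k} (hij : (i : ℕ) + 1 = j) : σ i < σ j := by
    by_contra! hle
    -- otherwise `T^(σ j) y, …, T^(σ i - 1) y, T^i x` is a short periodic pseudoorbit
    refine hT (σ i - σ j) (by omega) (hc.hasPPO_of_return (x := T^[i] x) (y := T^[σ j] y) ?_ ?_)
    · rw [← Function.iterate_add_apply, Nat.sub_add_cancel hle, hσ]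
    · rw [← Function.iterate_succ_apply' T, Nat.succ_eq_add_one, hij, hσ]
  have σ_strictMono : StrictMono σ := by
    cases k with
    | zero => exact fun i => i.elim0
    | succ k => exact Fin.strictMono_iff_lt_succ.2 fun i => σ_lt (by simp)
  have σ_eq_id : σ = id := (σ_strictMono.range_inj strictMono_id).1 <| by
    rw [(Finite.surjective_of_injective σ_injective).range_eq, Set.range_id]
  intro i hi
  simpa [σ_eq_id] using (hσ ⟨i, hi⟩).symm

lemma HasPPO.of_iterate {f : Y → Y} (hρ : ∀ x, ρ x x < ε) {L n : ℕ} (hL : 0 < L) (hn : 0 < n)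
    (h : HasPPO f^[n] ρ ε L) : HasPPO f ρ ε (L * n) := by
  obtain ⟨z, hz⟩ := h
  let w : ℕ → Y := fun j => f^[j % n] (z ((j / n : ℕ) : ZMod L))
  have w_periodic : Function.Periodic w (L * n) := fun j => by
    simp [w, Nat.add_mul_div_right _ _ hn]
  have w_step (j : ℕ) : ρ (f (w j)) (w (j + 1)) < ε := by
    have hdiv := Nat.div_add_mod j n
    have hdiv_succ := Nat.div_add_mod (j + 1) n
    simp only [w, ← Function.iterate_succ_apply' f]
    by_cases hj : n ∣ j + 1
    · rw [Nat.succ_div_of_dvd hj, Nat.mod_eq_zero_of_dvd hj, mul_add_one] at hdiv_succ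
      rw [Nat.succ_div_of_dvd hj, Nat.mod_eq_zero_of_dvd hj, show (j % n).succ = n by omega]
      simpa using hz ((j / n : ℕ) : ZMod L)
    · rw [Nat.succ_div_of_not_dvd hj] at hdiv_succ
      rw [Nat.succ_div_of_not_dvd hj, show (j + 1) % n = (j % n).succ by omega]
      exact hρ _
  have : NeZero (L * n) := ⟨(Nat.mul_pos hL hn).ne'⟩
  have w_val_succ (i : ZMod (L * n)) : w (i + 1).val = w (i.val + 1) := by
    rw [ZMod.val_add, ZMod.val_one_eq_one_mod, Nat.add_mod_mod, w_periodic.map_mod_nat]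
  exact ⟨fun i => w i.val, fun i => by simpa only [w_val_succ] using w_step i.val⟩

/-- The covering number of `Y` at scale `ε`: the least number of colours in a colouring with fibres
of `ρ`-mesh less than `ε` (and `0` if no finite number of colours suffices). -/
noncomputable def coverCount (ρ : Y → Y → ℝ) (ε : ℝ) : ℕ :=
  sInf {q : ℕ | ∃ c : Y → Fin q, HasSmallFibers ρ ε c}

lemma HasSmallFibers.coverCount_le_card [Fintype α] {c : Y → α} (hc : HasSmallFibers ρ ε c) :
    coverCount ρ ε ≤ Fintype.card α :=
  Nat.sInf_le ⟨Fintype.equivFin α ∘ c, fun _ _ h => hc ((Fintype.equivFin α).injective h)⟩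

end Pseudoorbits

section Iterates

variable {Y : Type*} [MetricSpace Y] {f : Y → Y} {ε : ℝ}

lemma dIter_lt_iff (hε : 0 < ε) {n : ℕ} {x y : Y} :
    dIter f n x y < ε ↔ ∀ i < n, dist (f^[i] x) (f^[i] y) < ε := by
  rw [dIter, iSup]
  rcases n.eq_zero_or_pos with rfl | hn
  · simpa using hε
  · have : Nonempty (Fin n) := ⟨⟨0, hn⟩⟩
    rw [(Set.finite_range _).csSup_lt_iff (Set.range_nonempty _), Set.forall_mem_range,
      Fin.forall_iff]

lemma dIter_add_lt (hε : 0 < ε) {m n : ℕ} {x y : Y} (hm : dIter f m x y < ε)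
    (hn : dIter f n (f^[m] x) (f^[m] y) < ε) : dIter f (m + n) x y < ε := by
  rw [dIter_lt_iff hε] at hm hn ⊢
  intro i hi
  rcases lt_or_ge i m with him | hmi
  · exact hm i him
  · simpa only [← Function.iterate_add_apply, Nat.sub_add_cancel hmi] using hn (i - m) (by omega)

lemma dIter_mul_lt (hε : 0 < ε) {n k : ℕ} {x y : Y}
    (h : ∀ i < k, dIter f n ((f^[n])^[i] x) ((f^[n])^[i] y) < ε) : dIter f (n * k) x y < ε := by
  induction k with
  | zero => exact (dIter_lt_iff hε).2 (by simp)
  | succ k ih =>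
    rw [mul_add_one]
    refine dIter_add_lt hε (ih fun i hi => h i (by omega)) ?_
    rw [Function.iterate_mul]
    exact h k k.lt_succ_self

lemma HasSmallFibers.dIter_add {α β : Type*} {m n : ℕ} {c : Y → α} {d : Y → β} (hε : 0 < ε)
    (hc : HasSmallFibers (dIter f m) ε c) (hd : HasSmallFibers (dIter f n) ε d) :
    HasSmallFibers (dIter f (m + n)) ε (fun x => (c x, d (f^[m] x))) := fun _ _ h =>
  dIter_add_lt hε (hc (congrArg Prod.fst h)) (hd (congrArg Prod.snd h))

lemma HasSmallFibers.coverCount_mul_le_choose {α : Type*} [Fintype α] {n k : ℕ} {c : Y → α}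
    (hε : 0 < ε) (hc : HasSmallFibers (dIter f n) ε c)
    (hf : ∀ m < k, ¬ HasPPO f^[n] (dIter f n) ε (m + 1)) :
    coverCount (dIter f (n * k)) ε ≤ (Fintype.card α).choose k := by
  classical
  let symbols (x : Y) : Finset α := (Finset.range k).image fun i => c ((f^[n])^[i] x)
  have symbols_mem (x : Y) : symbols x ∈ (Finset.univ : Finset α).powersetCard k := by
    refine Finset.mem_powersetCard.2 ⟨Finset.subset_univ _, ?_⟩
    rw [Finset.card_image_of_injOn (by simpa using hc.itinerary_injOn hf x), Finset.card_range]
  have symbols_small : HasSmallFibers (dIter f (n * k)) ε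
      fun x => (⟨symbols x, symbols_mem x⟩ : (Finset.univ : Finset α).powersetCard k) :=
    fun _ _ h => dIter_mul_lt hε fun i hi =>
      hc (hc.itinerary_eq_of_image_eq hf (congrArg Subtype.val h) i hi)
  simpa using symbols_small.coverCount_le_card

lemma HasSmallFibers.exists_hasPPO_of_choose_lt {α : Type*} [Fintype α] {n k : ℕ} {c : Y → α}
    (hε : 0 < ε) (hn : 0 < n) (hc : HasSmallFibers (dIter f n) ε c)
    (h : (Fintype.card α).choose k < coverCount (dIter f (n * k)) ε) :
    ∃ L, 0 < L ∧ L ≤ k ∧ HasPPO f (dIter f n) ε (L * n) := by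
  by_contra! hcon
  refine h.not_ge (hc.coverCount_mul_le_choose hε fun m hm hppo => ?_)
  exact hcon (m + 1) m.succ_pos hm
    (hppo.of_iterate (fun x => (dIter_lt_iff hε).2 (by simpa using fun _ _ => hε)) m.succ_pos hn)

end Iterates

lemma choose_lt_exp_mul {N k : ℕ} {t : ℝ} (h : N * exp 1 < k * exp t) :
    (N.choose k : ℝ) < exp (k * t) := by
  have hk : (0 : ℝ) < k := pos_of_mul_pos_left (h.trans_le' (by positivity)) (exp_pos t).le
  calc (N.choose k : ℝ) ≤ N ^ k / k.factorial := Nat.choose_le_pow_div k N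
    _ = (N / k) ^ k * (k ^ k / k.factorial) := by rw [div_pow]; field_simp
    _ ≤ (N / k) ^ k * exp k := by gcongr; exact pow_div_factorial_le_exp _ hk.le _
    _ = (N * exp 1 / k) ^ k := by rw [← mul_one (k : ℝ), exp_nat_mul, mul_one]; ring
    _ < exp t ^ k :=
      pow_lt_pow_left₀ ((div_lt_iff₀' hk).2 h) (by positivity) (mod_cast hk.ne')
    _ = exp (k * t) := (exp_nat_mul t k).symm

lemma exists_hasSmallFibers_dist {Y : Type*} [PseudoMetricSpace Y] {ε : ℝ}
    (hY : TotallyBounded (Set.univ : Set Y)) (hε : 0 < ε) :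
    ∃ (q : ℕ) (c : Y → Fin q), HasSmallFibers dist ε c := by
  obtain ⟨t, ht, hcover⟩ := Metric.totallyBounded_iff.1 hY (ε / 2) (half_pos hε)
  have exists_center (x : Y) : ∃ z : t, dist x z < ε / 2 := by
    simpa using hcover (Set.mem_univ x)
  choose center hcenter using exists_center
  have := ht.fintype
  refine ⟨_, Fintype.equivFin t ∘ center, fun x y hxy => ?_⟩
  have hcenter_eq : center x = center y := (Fintype.equivFin t).injective hxy
  calc dist x y ≤ dist x (center x) + dist y (center x) := dist_triangle_right _ _ _
    _ < ε / 2 + ε / 2 := add_lt_add (hcenter x) (hcenter_eq ▸ hcenter y)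
    _ = ε := add_halves ε

section TotallyBounded

variable {Y : Type*} [MetricSpace Y] {ε : ℝ}

lemma exists_hasSmallFibers_dIter (hY : TotallyBounded (Set.univ : Set Y)) (f : Y → Y)
    (hε : 0 < ε) (m : ℕ) : ∃ (q : ℕ) (c : Y → Fin q), HasSmallFibers (dIter f m) ε c := by
  induction m with
  | zero => exact ⟨1, fun _ => 0, fun _ _ _ => (dIter_lt_iff hε).2 (by simp)⟩
  | succ m ih =>
    obtain ⟨q, c, hc⟩ := ih
    obtain ⟨r, d, hd⟩ := exists_hasSmallFibers_dist hY hε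
    have hd' : HasSmallFibers (dIter f 1) ε d := fun _ _ h =>
      (dIter_lt_iff hε).2 (by simpa using hd h)
    exact ⟨q * r, finProdFinEquiv ∘ fun x => (c x, d (f^[m] x)), fun _ _ h =>
      hc.dIter_add hε hd' (finProdFinEquiv.injective h)⟩

lemma exists_hasSmallFibers_coverCount (hY : TotallyBounded (Set.univ : Set Y)) (f : Y → Y)
    (hε : 0 < ε) (m : ℕ) :
    ∃ c : Y → Fin (coverCount (dIter f m) ε), HasSmallFibers (dIter f m) ε c :=
  Nat.sInf_mem (exists_hasSmallFibers_dIter hY f hε m)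

lemma coverCount_pos [Nonempty Y] (hY : TotallyBounded (Set.univ : Set Y)) (f : Y → Y)
    (hε : 0 < ε) (m : ℕ) : 0 < coverCount (dIter f m) ε := by
  obtain ⟨c, -⟩ := exists_hasSmallFibers_coverCount hY f hε m
  exact (c (Classical.arbitrary Y)).pos

lemma coverCount_add_le (hY : TotallyBounded (Set.univ : Set Y)) (f : Y → Y) (hε : 0 < ε)
    (m n : ℕ) :
    coverCount (dIter f (m + n)) ε ≤ coverCount (dIter f m) ε * coverCount (dIter f n) ε := by
  obtain ⟨c, hc⟩ := exists_hasSmallFibers_coverCount hY f hε m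
  obtain ⟨d, hd⟩ := exists_hasSmallFibers_coverCount hY f hε n
  simpa using (hc.dIter_add hε hd).coverCount_le_card

lemma subadditive_log_coverCount [Nonempty Y] (hY : TotallyBounded (Set.univ : Set Y))
    (f : Y → Y) (hε : 0 < ε) : Subadditive fun m => log (coverCount (dIter f m) ε) := by
  intro m n
  have pos (k : ℕ) : (0 : ℝ) < coverCount (dIter f k) ε := mod_cast coverCount_pos hY f hε k
  rw [← log_mul (pos m).ne' (pos n).ne']
  exact log_le_log (pos _) (mod_cast coverCount_add_le hY f hε m n)

lemma exists_tendsto_log_coverCount_div [Nonempty Y] (hY : TotallyBounded (Set.univ : Set Y))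
    (f : Y → Y) (hε : 0 < ε) :
    ∃ h : ℝ, (∀ m : ℕ, m * h ≤ log (coverCount (dIter f m) ε)) ∧
      Tendsto (fun m : ℕ => log (coverCount (dIter f m) ε) / m) atTop (𝓝 h) := by
  have hsub := subadditive_log_coverCount hY f hε
  have hbdd : BddBelow (Set.range fun m : ℕ => log (coverCount (dIter f m) ε) / m) :=
    ⟨0, Set.forall_mem_range.2 fun m => div_nonneg (log_natCast_nonneg _) m.cast_nonneg⟩
  refine ⟨hsub.lim, fun m => ?_, hsub.tendsto_lim hbdd⟩
  rcases m.eq_zero_or_pos with rfl | hm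
  · simpa using log_natCast_nonneg _
  · exact (le_div_iff₀' (mod_cast hm)).1 (hsub.lim_le_div hbdd hm.ne')

lemma exists_hasPPO_period_le [Nonempty Y] (hY : TotallyBounded (Set.univ : Set Y)) (f : Y → Y)
    (hε : 0 < ε) {h : ℝ} (hh : ∀ m : ℕ, m * h ≤ log (coverCount (dIter f m) ε)) {n : ℕ}
    (hn : 0 < n) :
    ∃ M, 0 < M ∧ HasPPO f (dIter f n) ε M ∧
      (M : ℝ) ≤ 2 * exp (log (coverCount (dIter f n) ε) - n * h + 1) * n := by
  set N := coverCount (dIter f n) ε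
  set B := exp (log N - n * h + 1) with hB
  have hB_ge : 1 ≤ B := one_le_exp (by linarith [hh n])
  have hlt : N.choose (⌊B⌋₊ + 1) < coverCount (dIter f (n * (⌊B⌋₊ + 1))) ε := by
    have hN : exp (log N) = N := exp_log (mod_cast coverCount_pos hY f hε n)
    have hfloor : N * exp 1 < (⌊B⌋₊ + 1 : ℕ) * exp (n * h) :=
      calc N * exp 1 = B * exp (n * h) := by rw [← hN, hB, ← exp_add, ← exp_add]; ring_nf
        _ < (⌊B⌋₊ + 1 : ℕ) * exp (n * h) := by gcongr; exact_mod_cast Nat.lt_floor_add_one B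
    rw [← Nat.cast_lt (α := ℝ)]
    refine (choose_lt_exp_mul hfloor).trans_le
      ((le_log_iff_exp_le (mod_cast coverCount_pos hY f hε _)).1 ((hh _).trans' ?_))
    push_cast
    exact le_of_eq (by ring)
  obtain ⟨c, hc⟩ := exists_hasSmallFibers_coverCount hY f hε n
  obtain ⟨L, hL, hLB, hppo⟩ := hc.exists_hasPPO_of_choose_lt hε hn (by simpa using hlt)
  refine ⟨L * n, Nat.mul_pos hL hn, hppo, ?_⟩
  push_cast
  gcongr
  calc (L : ℝ) ≤ ⌊B⌋₊ + 1 := mod_cast hLB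
    _ ≤ B + B := add_le_add (Nat.floor_le (exp_pos _).le) hB_ge
    _ = 2 * B := (two_mul B).symm

lemma log_minPPOPeriod_div_le [Nonempty Y] (hY : TotallyBounded (Set.univ : Set Y)) (f : Y → Y)
    (hε : 0 < ε) {h : ℝ} (hh : ∀ m : ℕ, m * h ≤ log (coverCount (dIter f m) ε)) {n : ℕ}
    (hn : 0 < n) :
    log (minPPOPeriod f (dIter f n) ε) / n ≤
      (log (coverCount (dIter f n) ε) / n - h) + (log 2 + 1) / n + log n / n := by
  obtain ⟨M, hM, hppo, hle⟩ := exists_hasPPO_period_le hY f hε hh hn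
  have hmem : M ∈ {k | 0 < k ∧ HasPPO f (dIter f n) ε k} := ⟨hM, hppo⟩
  have hpos : 0 < minPPOPeriod f (dIter f n) ε := (Nat.sInf_mem ⟨M, hmem⟩).1
  have hmin : (minPPOPeriod f (dIter f n) ε : ℝ) ≤ M := mod_cast Nat.sInf_le hmem
  have hn' : (0 : ℝ) < n := mod_cast hn
  rw [div_le_iff₀ hn']
  calc log (minPPOPeriod f (dIter f n) ε)
      ≤ log (2 * exp (log (coverCount (dIter f n) ε) - n * h + 1) * n) :=
        log_le_log (mod_cast hpos) (hmin.trans hle)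
    _ = log 2 + (log (coverCount (dIter f n) ε) - n * h + 1) + log n := by
        rw [log_mul (by positivity) hn'.ne', log_mul two_ne_zero (exp_pos _).ne', log_exp]
    _ = _ := by field_simp; ring

theorem subexponential_pseudoorbit_period_general [Nonempty Y]
    (hY : TotallyBounded (Set.univ : Set Y)) (f : Y → Y) (hε : 0 < ε) :
    (∀ n : ℕ, 1 ≤ n → {k : ℕ | 0 < k ∧ HasPPO f (dIter f n) ε k}.Nonempty) ∧
      Tendsto (fun n : ℕ => log (minPPOPeriod f (dIter f n) ε) / (n : ℝ)) atTop (𝓝 0) := by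
  obtain ⟨h, hh, hlim⟩ := exists_tendsto_log_coverCount_div hY f hε
  constructor
  · intro n hn
    obtain ⟨M, hM, hppo, -⟩ := exists_hasPPO_period_le hY f hε hh hn
    exact ⟨M, hM, hppo⟩
  · have hlog : Tendsto (fun n : ℕ => log n / (n : ℝ)) atTop (𝓝 0) :=
      isLittleO_log_id_atTop.tendsto_div_nhds_zero.comp tendsto_natCast_atTop_atTop
    have hbound := ((hlim.sub_const h).add
      (tendsto_const_div_atTop_nhds_zero_nat (log 2 + 1))).add hlog
    rw [sub_self, add_zero, add_zero] at hbound
    refine squeeze_zero' (.of_forall fun n => div_nonneg (log_natCast_nonneg _) n.cast_nonneg)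
      ?_ hbound
    filter_upwards [eventually_gt_atTop 0] with n hn using log_minPPOPeriod_div_le hY f hε hh hn

end TotallyBounded

/-- **Lemma A.10** of Bochi–Garibaldi, "Extremal Norms for Fiber-Bunched Cocycles":
for an expansive homeomorphism `f` of a compact metric space and every sufficiently
small `ε > 0`, the minimal period `R(ε, ρ_{n,f}, f)` of a periodic pseudoorbit is finite
for each `n ≥ 1`, and `(1/n)·log R(ε, ρ_{n,f}, f) → 0` as `n → ∞`. -/
theorem subexponential_pseudoorbit_period {Y : Type*} [MetricSpace Y] [CompactSpace Y]
    [Nonempty Y] (f : Y ≃ₜ Y)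
    (hexp : ∃ c > (0 : ℝ), ∀ x y : Y, x ≠ y →
      ∃ n : ℤ, c < dist (zIter f n x) (zIter f n y)) :
    ∃ ε₀ > (0 : ℝ), ∀ ε : ℝ, 0 < ε → ε ≤ ε₀ →
      (∀ n : ℕ, 1 ≤ n →
        {k : ℕ | 0 < k ∧ HasPPO (f : Y → Y) (dIter (f : Y → Y) n) ε k}.Nonempty) ∧
      Filter.Tendsto
        (fun n : ℕ =>
          Real.log (minPPOPeriod (f : Y → Y) (dIter (f : Y → Y) n) ε) / (n : ℝ))
        Filter.atTop (nhds 0) := by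
  exact ⟨1, one_pos, fun _ hε _ =>
    subexponential_pseudoorbit_period_general isCompact_univ.totallyBounded f hε⟩
end

section
/- Let (X,d) be a nonempty compact metric space, T : X → X a homeomorphism, and F : X → GL(d,ℝ) continuous. Then there exists a Lyapunov maximizing measure μ whose support equals the Mather set M(F); in particular, M(F) is nonempty, compact, and T-invariant. (Proposition 6.1 of the paper.) -/
/-- Euclidean operator norm of a `d × d` real matrix. -/
noncomputable def matNorm {d : ℕ} (A : Matrix (Fin d) (Fin d) ℝ) : ℝ :=
  ‖LinearMap.toContinuousLinearMap (Matrix.toEuclideanLin A)‖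

/-- Cocycle products: `cocycle T F n x = F(T^{n-1}x) ⬝ ⋯ ⬝ F(Tx) ⬝ F(x)`. -/
def cocycle {X : Type*} (T : X → X) {d : ℕ} (F : X → Matrix (Fin d) (Fin d) ℝ) :
    ℕ → X → Matrix (Fin d) (Fin d) ℝ
  | 0, _ => 1
  | n + 1, x => cocycle T F n (T x) * F x

/-- `μ` is a `T`-invariant Borel probability measure. -/
def IsInvProb {X : Type*} [MeasurableSpace X] (T : X → X)
    (μ : MeasureTheory.Measure X) : Prop :=
  MeasureTheory.IsProbabilityMeasure μ ∧ μ.map T = μ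

/-- Top Lyapunov exponent `χ₁(F, μ)` of the cocycle `(T,F)` w.r.t. the measure `μ`. -/
noncomputable def lyapExp {X : Type*} [MeasurableSpace X] (T : X → X) {d : ℕ}
    (F : X → Matrix (Fin d) (Fin d) ℝ) (μ : MeasureTheory.Measure X) : ℝ :=
  ⨅ n : ℕ, (1 / (n + 1 : ℝ)) * ∫ x, Real.log (matNorm (cocycle T F (n + 1) x)) ∂μ

/-- Maximal Lyapunov exponent `β(F)`. -/
noncomputable def maxLyap {X : Type*} [MeasurableSpace X] (T : X → X) {d : ℕ}
    (F : X → Matrix (Fin d) (Fin d) ℝ) : ℝ :=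
  sSup {r : ℝ | ∃ μ : MeasureTheory.Measure X, IsInvProb T μ ∧ r = lyapExp T F μ}

/-- Topological support of a measure. -/
def measSupport {X : Type*} [TopologicalSpace X] [MeasurableSpace X]
    (μ : MeasureTheory.Measure X) : Set X :=
  {x | ∀ U : Set X, IsOpen U → x ∈ U → 0 < μ U}

/-- The Mather set `M(F)`: union of supports of all Lyapunov maximizing measures. -/
def mather {X : Type*} [TopologicalSpace X] [MeasurableSpace X] (T : X → X) {d : ℕ}
    (F : X → Matrix (Fin d) (Fin d) ℝ) : Set X :=
  ⋃ μ ∈ {μ : MeasureTheory.Measure X | IsInvProb T μ ∧ lyapExp T F μ = maxLyap T F},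
    measSupport μ

/-!
Averaging Dirac masses along an orbit produces an invariant probability measure, so the invariant
probability measures form a nonempty weak-* compact set. On it `χ₁(F, ·)` is an infimum of
integrals of continuous functions, hence upper semicontinuous, and so it attains its maximum
`β(F)`. An infimum of integrals is also concave, even for countable convex combinations, so
`∑ i, 2 ^ (-(i + 1)) • μᵢ` is maximizing whenever all the `μᵢ` are. Choosing the `μᵢ` so that
their supports cover a countable dense subset of `M(F)` yields a maximizing measure whose support,
being closed, is all of `M(F)`.
-/

open MeasureTheory Filter Topology Set
open scoped ENNReal

section LogNorm

variable {R : Type*} [NormedRing R]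

lemma log_norm_one_nonneg : 0 ≤ Real.log ‖(1 : R)‖ := by
  rcases subsingleton_or_nontrivial R with _ | _
  · simp [Subsingleton.elim (1 : R) 0]
  · exact Real.log_nonneg (one_le_norm_one R)

lemma log_norm_mul_le {a b : R} (ha : IsUnit a) (hb : IsUnit b) :
    Real.log ‖a * b‖ ≤ Real.log ‖a‖ + Real.log ‖b‖ := by
  rcases subsingleton_or_nontrivial R with _ | _
  · simp [Subsingleton.elim a 0, Subsingleton.elim b 0]
  · rw [← Real.log_mul (norm_ne_zero_iff.2 ha.ne_zero) (norm_ne_zero_iff.2 hb.ne_zero)]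
    exact Real.log_le_log (norm_pos_iff.2 (ha.mul hb).ne_zero) (norm_mul_le a b)

lemma continuous_log_norm_of_isUnit {X : Type*} [TopologicalSpace X] {f : X → R}
    (hf : Continuous f) (hunit : ∀ x, IsUnit (f x)) : Continuous fun x => Real.log ‖f x‖ := by
  rcases subsingleton_or_nontrivial R with _ | _
  · simpa only [Subsingleton.elim (f _) 0] using continuous_const
  · exact hf.norm.log fun x => norm_ne_zero_iff.2 (hunit x).ne_zero

end LogNorm

section Support

variable {X : Type*} [TopologicalSpace X] [MeasurableSpace X]

lemma measSupport_eq_support (μ : Measure X) : measSupport μ = μ.support := by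
  rw [Measure.support_eq_forall_isOpen]
  exact Set.ext fun x => forall_congr' fun U => imp.swap

lemma support_map_eq_closure_image [HereditarilyLindelofSpace X] [OpensMeasurableSpace X]
    {Y : Type*} [TopologicalSpace Y] [MeasurableSpace Y] [BorelSpace Y] {f : X → Y}
    (hf : Continuous f) (μ : Measure X) : (μ.map f).support = closure (f '' μ.support) := by
  apply Subset.antisymm
  · refine Measure.support_subset_of_isClosed isClosed_closure ?_
    rw [mem_ae_map_iff hf.aemeasurable isClosed_closure.measurableSet]
    exact mem_of_superset Measure.support_mem_ae fun x hx => subset_closure (mem_image_of_mem f hx)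
  · refine closure_minimal ?_ Measure.isClosed_support
    rintro _ ⟨x, hx, rfl⟩
    rw [Measure.mem_support_iff_forall] at hx ⊢
    exact fun U hU => (hx _ (hf.continuousAt hU)).trans_le
      (Measure.le_map_apply hf.aemeasurable U)

end Support

section DyadicMixture

variable {X : Type*} [MeasurableSpace X]

/-- The convex combination `∑ i, 2 ^ (-(i + 1)) • m i` of a sequence of measures. All weights are
positive, so it charges whatever some `m i` charges. -/
noncomputable def dyadicMixture (m : ℕ → Measure X) : Measure X :=
  Measure.sum fun i => (2⁻¹ : ℝ≥0∞) ^ (i + 1) • m i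

instance (m : ℕ → Measure X) [∀ i, IsProbabilityMeasure (m i)] :
    IsProbabilityMeasure (dyadicMixture m) where
  measure_univ := by
    simp only [dyadicMixture, Measure.sum_apply _ MeasurableSet.univ, Measure.smul_apply,
      measure_univ, smul_eq_mul, mul_one, ENNReal.tsum_geometric_add_one, ENNReal.one_sub_inv_two,
      inv_inv]
    exact ENNReal.inv_mul_cancel two_ne_zero ENNReal.ofNat_ne_top

lemma absolutelyContinuous_dyadicMixture (m : ℕ → Measure X) (i : ℕ) : m i ≪ dyadicMixture m :=
  (Measure.absolutelyContinuous_smul (by simp)).trans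
    (Measure.absolutelyContinuous_sum_right i .rfl)

lemma map_dyadicMixture {Y : Type*} [MeasurableSpace Y] {f : X → Y} (hf : Measurable f)
    (m : ℕ → Measure X) : (dyadicMixture m).map f = dyadicMixture fun i => (m i).map f := by
  simp only [dyadicMixture, Measure.map_sum hf.aemeasurable, Measure.map_smul]

lemma le_integral_dyadicMixture {m : ℕ → Measure X} {f : X → ℝ} {b : ℝ}
    (hf : Integrable f (dyadicMixture m)) (hb : ∀ i, b ≤ ∫ x, f x ∂m i) :
    b ≤ ∫ x, f x ∂dyadicMixture m := by
  have hweights : HasSum (fun i : ℕ => ((2⁻¹ : ℝ≥0∞) ^ (i + 1)).toReal) 1 := by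
    convert! hasSum_geometric_two' 1 using 2 with i
    rw [ENNReal.toReal_pow, ENNReal.toReal_inv, ENNReal.toReal_ofNat, pow_succ', inv_pow]
    ring
  have hconst := hweights.mul_right b
  rw [one_mul] at hconst
  refine hasSum_le (fun i => ?_) hconst (hasSum_integral_measure hf)
  rw [integral_smul_measure, smul_eq_mul]
  exact mul_le_mul_of_nonneg_left (hb i) ENNReal.toReal_nonneg

lemma exists_support_eq_biUnion_support [TopologicalSpace X] [SecondCountableTopology X]
    {𝓜 : Set (Measure X)} (hne : 𝓜.Nonempty)
    (hmix : ∀ m : ℕ → Measure X, (∀ i, m i ∈ 𝓜) → dyadicMixture m ∈ 𝓜) :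
    ∃ μ ∈ 𝓜, μ.support = ⋃ ν ∈ 𝓜, ν.support := by
  suffices ∃ μ ∈ 𝓜, (⋃ ν ∈ 𝓜, ν.support) ⊆ μ.support by
    obtain ⟨μ, hμ, hsub⟩ := this
    exact ⟨μ, hμ, (subset_biUnion_of_mem (u := Measure.support) hμ).antisymm hsub⟩
  rcases (⋃ ν ∈ 𝓜, ν.support).eq_empty_or_nonempty with hempty | hnonempty
  · obtain ⟨μ, hμ⟩ := hne
    exact ⟨μ, hμ, hempty.trans_subset (empty_subset _)⟩
  have := hnonempty.to_subtype
  let x := TopologicalSpace.denseSeq (⋃ ν ∈ 𝓜, ν.support)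
  have hx : ∀ i, ∃ ν ∈ 𝓜, (x i : X) ∈ ν.support := fun i => by
    simpa only [mem_iUnion, exists_prop] using (x i).2
  choose m hm hxm using hx
  refine ⟨dyadicMixture m, hmix m hm, ?_⟩
  calc (⋃ ν ∈ 𝓜, ν.support)
      ⊆ closure (range fun i => (x i : X)) := by
        simpa only [range_comp'] using
          Subtype.dense_iff.1 (TopologicalSpace.denseRange_denseSeq _)
    _ ⊆ (dyadicMixture m).support := by
        refine closure_minimal ?_ Measure.isClosed_support
        rintro _ ⟨i, rfl⟩
        exact (absolutelyContinuous_dyadicMixture m i).support_mono (hxm i)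

end DyadicMixture

section KrylovBogoliubov

lemma birkhoffAverage_comp_self {α M : Type*} [AddCommMonoid M] [Module ℝ M] (f : α → α)
    (g : α → M) (n : ℕ) (x : α) :
    birkhoffAverage ℝ f (g ∘ f) n x = birkhoffAverage ℝ f g n (f x) := by
  simp only [birkhoffAverage, birkhoffSum, Function.comp_apply, ← Function.iterate_succ_apply,
    Function.iterate_succ_apply']

/-- The empirical measure `(n + 1)⁻¹ ∑ k ≤ n, δ_{f^k(x)}` along the orbit of `x`. It averages
`n + 1` points, so that every `n` gives a probability measure. -/
noncomputable def empiricalMeasure {α : Type*} [MeasurableSpace α] (f : α → α) (x : α) (n : ℕ) :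
    ProbabilityMeasure α :=
  ⟨((n + 1 : ℕ) : ℝ≥0∞)⁻¹ • ∑ k ∈ Finset.range (n + 1), Measure.dirac (f^[k] x), ⟨by
    simpa only [Measure.smul_apply, Measure.finsetSum_apply, measure_univ, Finset.sum_const,
      Finset.card_range, nsmul_eq_mul, mul_one, smul_eq_mul] using
      ENNReal.inv_mul_cancel (Nat.cast_ne_zero.2 n.succ_ne_zero) (ENNReal.natCast_ne_top _)⟩⟩

lemma integral_empiricalMeasure {α : Type*} [MeasurableSpace α] (f : α → α) (x : α) (n : ℕ)
    {g : α → ℝ} (hg : StronglyMeasurable g) :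
    ∫ y, g y ∂(empiricalMeasure f x n : Measure α) = birkhoffAverage ℝ f g (n + 1) x := by
  simp only [empiricalMeasure, ProbabilityMeasure.coe_mk, integral_smul_measure,
    integral_finsetSum_measure fun _ _ => integrable_dirac' hg enorm_lt_top,
    integral_dirac' _ _ hg, ENNReal.toReal_inv, ENNReal.toReal_natCast, birkhoffAverage,
    birkhoffSum]

variable {X : Type*} [TopologicalSpace X] [MeasurableSpace X] [BorelSpace X]
  [HasOuterApproxClosed X] {T : X → X}

lemma map_eq_self_of_mapClusterPt_empiricalMeasure (hT : Continuous T) {x : X}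
    {μ : ProbabilityMeasure X} (hμ : MapClusterPt μ atTop (empiricalMeasure T x)) :
    (μ : Measure X).map T = μ := by
  have := (μ : Measure X).isProbabilityMeasure_map hT.aemeasurable
  refine ext_of_forall_integral_eq_of_IsFiniteMeasure fun g => ?_
  rw [integral_map hT.aemeasurable g.continuous.aestronglyMeasurable, ← sub_eq_zero]
  let defect (ν : ProbabilityMeasure X) : ℝ := ∫ y, g (T y) ∂(ν : Measure X) - ∫ y, g y ∂ν
  have hdefect : Continuous defect :=
    (ProbabilityMeasure.continuous_integral_boundedContinuousFunction
      (g.compContinuous ⟨T, hT⟩)).sub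
      (ProbabilityMeasure.continuous_integral_boundedContinuousFunction g)
  have hempirical (n : ℕ) : defect (empiricalMeasure T x n) =
      birkhoffAverage ℝ T g (n + 1) (T x) - birkhoffAverage ℝ T g (n + 1) x := by
    rw [← birkhoffAverage_comp_self,
      ← integral_empiricalMeasure T x n (g.continuous.comp hT).stronglyMeasurable,
      ← integral_empiricalMeasure T x n g.continuous.stronglyMeasurable]
    rfl
  have hlim : Tendsto (defect ∘ empiricalMeasure T x) atTop (𝓝 0) :=
    ((tendsto_add_atTop_iff_nat 1).2
      (tendsto_birkhoffAverage_apply_sub_birkhoffAverage' ℝ g.isBounded_range T x)).congr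
      fun n => (hempirical n).symm
  exact eq_of_nhds_neBot
    ((hμ.continuousAt_comp hdefect.continuousAt).neBot.mono (inf_le_inf_left _ hlim))

variable [CompactSpace X]

lemma exists_probabilityMeasure_map_eq_self [T2Space X] [Nonempty X] (hT : Continuous T) :
    ∃ μ : ProbabilityMeasure X, (μ : Measure X).map T = μ := by
  obtain ⟨x⟩ := ‹Nonempty X›
  obtain ⟨μ, hμ⟩ := exists_clusterPt_of_compactSpace (map (empiricalMeasure T x) atTop)
  exact ⟨μ, map_eq_self_of_mapClusterPt_empiricalMeasure hT hμ⟩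

lemma exists_isMaxOn_map_eq_self [T2Space X] [Nonempty X] {β : Type*} [LinearOrder β]
    (hT : Continuous T) {Φ : ProbabilityMeasure X → β} (hΦ : UpperSemicontinuous Φ) :
    ∃ μ ∈ {μ : ProbabilityMeasure X | (μ : Measure X).map T = μ},
      IsMaxOn Φ {μ : ProbabilityMeasure X | (μ : Measure X).map T = μ} μ := by
  have hclosed : IsClosed {μ : ProbabilityMeasure X | (μ : Measure X).map T = μ} := by
    simpa only [id_eq, ← ProbabilityMeasure.toMeasure_injective.eq_iff,
      ProbabilityMeasure.toMeasure_map] using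
      isClosed_eq (ProbabilityMeasure.continuous_map hT) continuous_id
  exact (hΦ.upperSemicontinuousOn _).exists_isMaxOn (exists_probabilityMeasure_map_eq_self hT)
    hclosed.isCompact

end KrylovBogoliubov

section InfimumOfIntegrals

variable {X : Type*} [TopologicalSpace X] [CompactSpace X] [MeasurableSpace X]
  [OpensMeasurableSpace X] {ι : Type*} {φ : ι → X → ℝ} {b : ℝ}

lemma bddBelow_range_integral (hφ : ∀ i, Continuous (φ i)) (hb : ∀ i x, b ≤ φ i x)
    (μ : Measure X) [IsProbabilityMeasure μ] : BddBelow (range fun i => ∫ x, φ i x ∂μ) := by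
  refine ⟨b, ?_⟩
  rintro _ ⟨i, rfl⟩
  simpa using integral_mono (μ := μ) (integrable_const b)
    ((hφ i).integrable_of_hasCompactSupport (.of_compactSpace _)) (hb i)

lemma upperSemicontinuous_iInf_integral (hφ : ∀ i, Continuous (φ i)) (hb : ∀ i x, b ≤ φ i x) :
    UpperSemicontinuous fun μ : ProbabilityMeasure X => ⨅ i, ∫ x, φ i x ∂(μ : Measure X) :=
  upperSemicontinuous_ciInf (fun μ => bddBelow_range_integral hφ hb μ) fun i =>
    (ProbabilityMeasure.continuous_integral_continuousMap
      (⟨φ i, hφ i⟩ : C(X, ℝ))).upperSemicontinuous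

lemma le_iInf_integral_dyadicMixture [Nonempty ι] (hφ : ∀ i, Continuous (φ i))
    (hb : ∀ i x, b ≤ φ i x) {m : ℕ → Measure X} [∀ k, IsProbabilityMeasure (m k)] {c : ℝ}
    (hc : ∀ k, c ≤ ⨅ i, ∫ x, φ i x ∂m k) : c ≤ ⨅ i, ∫ x, φ i x ∂dyadicMixture m :=
  le_ciInf fun i => le_integral_dyadicMixture
    ((hφ i).integrable_of_hasCompactSupport (.of_compactSpace _)) fun k =>
      (hc k).trans (ciInf_le (bddBelow_range_integral hφ hb (m k)) i)

end InfimumOfIntegrals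

section Cocycle

open scoped Matrix.Norms.L2Operator

variable {X : Type*} {T : X → X} {d : ℕ} {F : X → Matrix (Fin d) (Fin d) ℝ}

lemma isUnit_cocycle (hF : ∀ x, IsUnit (F x)) (n : ℕ) (x : X) : IsUnit (cocycle T F n x) := by
  induction n generalizing x with
  | zero => exact isUnit_one
  | succ n ih => exact (ih (T x)).mul (hF x)

lemma cocycle_succ_mul_inv (hF : ∀ x, IsUnit (F x)) (n : ℕ) (x : X) :
    cocycle T F (n + 1) x * (F x)⁻¹ = cocycle T F n (T x) :=
  Matrix.mul_nonsing_inv_cancel_right _ _ ((Matrix.isUnit_iff_isUnit_det _).1 (hF x))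

lemma neg_mul_le_log_norm_cocycle (hF : ∀ x, IsUnit (F x)) {K : ℝ}
    (hK : ∀ x, Real.log ‖(F x)⁻¹‖ ≤ K) (n : ℕ) (x : X) :
    -(n * K) ≤ Real.log ‖cocycle T F n x‖ := by
  induction n generalizing x with
  | zero => simpa [cocycle] using log_norm_one_nonneg
  | succ n ih =>
    have hstep : Real.log ‖cocycle T F n (T x)‖ ≤
        Real.log ‖cocycle T F (n + 1) x‖ + Real.log ‖(F x)⁻¹‖ := by
      rw [← cocycle_succ_mul_inv hF]
      exact log_norm_mul_le (isUnit_cocycle hF _ x) (Matrix.isUnit_nonsing_inv_iff.2 (hF x))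
    push_cast
    linarith [ih (T x), hK x]

/-- The finite-time growth rate `x ↦ (1/(n+1)) log ‖F^{(n+1)}(x)‖`, whose integrals have infimum
`χ₁(F, μ)`. The index is shifted by one, as in `lyapExp`. -/
noncomputable def growthRate (T : X → X) (F : X → Matrix (Fin d) (Fin d) ℝ) (n : ℕ) (x : X) : ℝ :=
  1 / (n + 1 : ℝ) * Real.log (matNorm (cocycle T F (n + 1) x))

lemma lyapExp_eq_iInf_integral_growthRate [MeasurableSpace X] (μ : Measure X) :
    lyapExp T F μ = ⨅ n, ∫ x, growthRate T F n x ∂μ := by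
  simp only [lyapExp, growthRate, integral_const_mul]

variable [TopologicalSpace X]

lemma continuous_cocycle (hT : Continuous T) (hF : Continuous F) (n : ℕ) :
    Continuous (cocycle T F n) := by
  induction n with
  | zero => exact continuous_const
  | succ n ih => exact (ih.comp hT).mul hF

lemma continuous_growthRate (hT : Continuous T) (hFcont : Continuous F)
    (hFunit : ∀ x, IsUnit (F x)) (n : ℕ) : Continuous (growthRate T F n) :=
  continuous_const.mul (continuous_log_norm_of_isUnit (R := Matrix (Fin d) (Fin d) ℝ)
    (continuous_cocycle hT hFcont _) (isUnit_cocycle hFunit _))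

lemma exists_log_norm_inv_le [CompactSpace X] (hFcont : Continuous F)
    (hFunit : ∀ x, IsUnit (F x)) : ∃ K, ∀ x, Real.log ‖(F x)⁻¹‖ ≤ K := by
  have hinv : Continuous fun x => (F x)⁻¹ := by
    simp only [Matrix.inv_def, Ring.inverse_eq_inv']
    exact (hFcont.matrix_det.inv₀ fun x =>
      ((Matrix.isUnit_iff_isUnit_det _).1 (hFunit x)).ne_zero).smul hFcont.matrix_adjugate
  obtain ⟨K, hK⟩ := (isCompact_range (continuous_log_norm_of_isUnit hinv fun x =>
    Matrix.isUnit_nonsing_inv_iff.2 (hFunit x))).bddAbove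
  exact ⟨K, fun x => hK (mem_range_self x)⟩

lemma exists_le_growthRate [CompactSpace X] (hFcont : Continuous F)
    (hFunit : ∀ x, IsUnit (F x)) : ∃ b, ∀ n x, b ≤ growthRate T F n x := by
  obtain ⟨K, hK⟩ := exists_log_norm_inv_le hFcont hFunit
  refine ⟨-K, fun n x => ?_⟩
  have hlog := neg_mul_le_log_norm_cocycle (T := T) hFunit hK (n + 1) x
  rw [growthRate, one_div, ← div_eq_inv_mul, le_div_iff₀ (by positivity)]
  push_cast at hlog
  exact le_trans (by linarith) hlog

end Cocycle

section LyapunovMaximizing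

variable {X : Type*} [MeasurableSpace X] {T : X → X} {d : ℕ} {F : X → Matrix (Fin d) (Fin d) ℝ}

/-- `μ` is a Lyapunov maximizing measure: a `T`-invariant probability measure with
`χ₁(F, μ) = β(F)`. -/
def IsLyapMaximizing (T : X → X) (F : X → Matrix (Fin d) (Fin d) ℝ) (μ : Measure X) : Prop :=
  IsInvProb T μ ∧ lyapExp T F μ = maxLyap T F

lemma mather_eq_biUnion_support [TopologicalSpace X] :
    mather T F = ⋃ μ ∈ {μ | IsLyapMaximizing T F μ}, μ.support := by
  simp only [mather, measSupport_eq_support, IsLyapMaximizing]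

lemma isInvProb_dyadicMixture (hT : Measurable T) {m : ℕ → Measure X}
    (hm : ∀ i, IsInvProb T (m i)) : IsInvProb T (dyadicMixture m) := by
  have := fun i => (hm i).1
  refine ⟨inferInstance, ?_⟩
  simp only [map_dyadicMixture hT, (hm _).2]

variable [TopologicalSpace X] [CompactSpace X] [T2Space X] [BorelSpace X]

section Existence

variable [HasOuterApproxClosed X]

lemma exists_isGreatest_lyapExp [Nonempty X] (hT : Continuous T) (hFcont : Continuous F)
    (hFunit : ∀ x, IsUnit (F x)) : ∃ μ : Measure X, IsInvProb T μ ∧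
      IsGreatest {r | ∃ ν : Measure X, IsInvProb T ν ∧ r = lyapExp T F ν} (lyapExp T F μ) := by
  obtain ⟨b, hb⟩ := exists_le_growthRate (T := T) hFcont hFunit
  have husc : UpperSemicontinuous fun μ : ProbabilityMeasure X => lyapExp T F (μ : Measure X) := by
    simpa only [lyapExp_eq_iInf_integral_growthRate] using
      upperSemicontinuous_iInf_integral (continuous_growthRate hT hFcont hFunit) hb
  obtain ⟨μ, hμ, hmax⟩ := exists_isMaxOn_map_eq_self hT husc
  refine ⟨μ, ⟨inferInstance, hμ⟩, ⟨μ, ⟨inferInstance, hμ⟩, rfl⟩, ?_⟩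
  rintro _ ⟨ν, ⟨hprob, hinv⟩, rfl⟩
  exact hmax (a := ⟨ν, hprob⟩) hinv

lemma exists_isLyapMaximizing [Nonempty X] (hT : Continuous T) (hFcont : Continuous F)
    (hFunit : ∀ x, IsUnit (F x)) : ∃ μ, IsLyapMaximizing T F μ := by
  obtain ⟨μ, hμ, hgreatest⟩ := exists_isGreatest_lyapExp hT hFcont hFunit
  exact ⟨μ, hμ, hgreatest.csSup_eq.symm⟩

lemma lyapExp_le_maxLyap (hT : Continuous T) (hFcont : Continuous F)
    (hFunit : ∀ x, IsUnit (F x)) {ν : Measure X} (hν : IsInvProb T ν) :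
    lyapExp T F ν ≤ maxLyap T F := by
  have := hν.1
  have := ν.nonempty_of_neZero
  obtain ⟨μ, -, hgreatest⟩ := exists_isGreatest_lyapExp hT hFcont hFunit
  exact le_csSup hgreatest.bddAbove ⟨ν, hν, rfl⟩

lemma isLyapMaximizing_dyadicMixture (hT : Continuous T) (hFcont : Continuous F)
    (hFunit : ∀ x, IsUnit (F x)) {m : ℕ → Measure X} (hm : ∀ i, IsLyapMaximizing T F (m i)) :
    IsLyapMaximizing T F (dyadicMixture m) := by
  have := fun i => (hm i).1.1
  obtain ⟨b, hb⟩ := exists_le_growthRate (T := T) hFcont hFunit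
  have hinv := isInvProb_dyadicMixture hT.measurable fun i => (hm i).1
  refine ⟨hinv, (lyapExp_le_maxLyap hT hFcont hFunit hinv).antisymm ?_⟩
  rw [lyapExp_eq_iInf_integral_growthRate]
  refine le_iInf_integral_dyadicMixture (continuous_growthRate hT hFcont hFunit) hb fun i => ?_
  rw [← lyapExp_eq_iInf_integral_growthRate, (hm i).2]

end Existence

variable [SecondCountableTopology X]

lemma image_support_of_map_eq_self (hT : Continuous T) {μ : Measure X} (hμ : μ.map T = μ) :
    T '' μ.support = μ.support := by
  conv_rhs => rw [← hμ, support_map_eq_closure_image hT]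
  exact (Measure.isClosed_support.isCompact.image hT).isClosed.closure_eq.symm

lemma exists_isLyapMaximizing_support_eq_mather [Nonempty X] (hT : Continuous T)
    (hFcont : Continuous F) (hFunit : ∀ x, IsUnit (F x)) :
    ∃ μ, IsLyapMaximizing T F μ ∧ μ.support = mather T F := by
  rw [mather_eq_biUnion_support]
  exact exists_support_eq_biUnion_support (exists_isLyapMaximizing hT hFcont hFunit) fun _ =>
    isLyapMaximizing_dyadicMixture hT hFcont hFunit

theorem mather_is_support_of_maximizing_measure_general [Nonempty X] (hT : Continuous T)
    (hFcont : Continuous F) (hFunit : ∀ x, IsUnit (F x)) :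
    ∃ μ : Measure X, IsInvProb T μ ∧ lyapExp T F μ = maxLyap T F ∧
      measSupport μ = mather T F ∧ (mather T F).Nonempty ∧ IsCompact (mather T F) ∧
      T '' mather T F = mather T F := by
  obtain ⟨μ, ⟨⟨hprob, hinv⟩, hmax⟩, hsupport⟩ :=
    exists_isLyapMaximizing_support_eq_mather hT hFcont hFunit
  rw [← hsupport]
  exact ⟨μ, ⟨hprob, hinv⟩, hmax, measSupport_eq_support μ,
    Measure.nonempty_support (IsProbabilityMeasure.ne_zero μ),
    Measure.isClosed_support.isCompact, image_support_of_map_eq_self hT hinv⟩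

end LyapunovMaximizing

/-- **Proposition 6.1** of Bochi–Garibaldi, "Extremal Norms for Fiber-Bunched Cocycles":
the Mather set `M(F)` is the support of some Lyapunov maximizing measure; in particular
it is nonempty, compact and `T`-invariant. -/
theorem mather_is_support_of_maximizing_measure {X : Type*} [MetricSpace X]
    [CompactSpace X] [Nonempty X] [MeasurableSpace X] [BorelSpace X]
    (T : X ≃ₜ X) (d : ℕ) (F : X → Matrix (Fin d) (Fin d) ℝ)
    (hFcont : Continuous F) (hFunit : ∀ x, IsUnit (F x)) :
    ∃ μ : MeasureTheory.Measure X, IsInvProb (T : X → X) μ ∧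
      lyapExp (T : X → X) F μ = maxLyap (T : X → X) F ∧
      measSupport μ = mather (T : X → X) F ∧
      (mather (T : X → X) F).Nonempty ∧
      IsCompact (mather (T : X → X) F) ∧
      (T : X → X) '' mather (T : X → X) F = mather (T : X → X) F :=
  mather_is_support_of_maximizing_measure_general T.continuous hFcont hFunit
end
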